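/- arXiv:1811.11411 — 4 statements merged into one kernel-verified Lean document; each statement's English description precedes it below -/
import Mathlib

section
/- If G is a graph on n vertices with k connected components, then F(G) ≤ (k-1) + Σ_{i=1}^{n-k+1} C(n-k+1, i)·h_i, with equality if and only if G is the disjoint union of k-1 isolated vertices and a complete graph K_{n-k+1}. -/
open SimpleGraph

/-- The core index of a graph `G`: the number of connected subgraphs of `G`. -/
noncomputable def coreIndex {V : Type*} (G : SimpleGraph V) : ℕ :=
  Nat.card {H : G.Subgraph // H.Connected}

/-- `numConnectedGraphs i`: the number of connected labeled graphs on `i` vertices. -/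
noncomputable def numConnectedGraphs (i : ℕ) : ℕ :=
  Nat.card {G : SimpleGraph (Fin i) // G.Connected}

/-! Choose a set `S` of representatives of the components of `G` and collapse `S` to a single
point, so that `G` maps to the complete graph on `n - k + 1` vertices. The `k` one-vertex subgraphs
inside `S` are the only connected subgraphs avoiding the complement of `S`. The collapse is
injective on each component, hence on the remaining connected subgraphs, and none of these is sent
to the collapsed point. So `coreIndex G - k` is at most the core index of the complete graph minus
one. In case of equality every edge of the complete graph lifts to `G`: the complement of `S` is a
clique and each of its vertices is adjacent to a representative, necessarily always the same one. -/

section Map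

variable {V W : Type*} {G : SimpleGraph V} {G' : SimpleGraph W}

lemma subgraph_connected_map (f : G →g G') {H : G.Subgraph} (hH : H.Connected) :
    (H.map f).Connected := by
  let g : H.coe →g (H.map f).coe :=
    { toFun := fun x => ⟨f x, Set.mem_image_of_mem f x.2⟩
      map_rel' := fun {a b} hab => ⟨a, b, hab, rfl, rfl⟩ }
  refine ⟨hH.coe.map g ?_⟩
  rintro ⟨_, x, hx, rfl⟩
  exact ⟨⟨x, hx⟩, rfl⟩

lemma subgraph_le_of_map_le {f : G →g G'} {H H' : G.Subgraph}
    (hf : Set.InjOn f (H.verts ∪ H'.verts)) (h : H.map f ≤ H'.map f) : H ≤ H' := by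
  refine ⟨fun x hx => ?_, fun x y hxy => ?_⟩
  · obtain ⟨x', hx', hfx⟩ := h.1 ⟨x, hx, rfl⟩
    rwa [← hf (.inr hx') (.inl hx) hfx]
  · obtain ⟨x', y', hxy', hfx, hfy⟩ := h.2 ⟨x, y, hxy, rfl, rfl⟩
    rwa [← hf (.inr hxy'.fst_mem) (.inl hxy.fst_mem) hfx,
      ← hf (.inr hxy'.snd_mem) (.inl hxy.snd_mem) hfy]

lemma subgraph_eq_of_map_eq {f : G →g G'} {H H' : G.Subgraph}
    (hf : Set.InjOn f (H.verts ∪ H'.verts)) (h : H.map f = H'.map f) : H = H' :=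
  (subgraph_le_of_map_le hf h.le).antisymm
    (subgraph_le_of_map_le (Set.union_comm H.verts H'.verts ▸ hf) h.ge)

lemma subgraph_map_injective {f : G →g G'} (hf : Function.Injective f) :
    Function.Injective (Subgraph.map f) :=
  fun _ _ => subgraph_eq_of_map_eq hf.injOn

lemma subgraph_verts_subset_supp {H : G.Subgraph} (hH : H.Connected) {v : V} (hv : v ∈ H.verts) :
    H.verts ⊆ (G.connectedComponentMk v).supp := fun u hu =>
  ConnectedComponent.sound ((hH.coe.preconnected ⟨u, hu⟩ ⟨v, hv⟩).map H.hom)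

end Map

section CoreIndex

variable {V W : Type*} {G : SimpleGraph V} {G' : SimpleGraph W}

lemma coreIndex_eq_ncard (G : SimpleGraph V) : coreIndex G = {H : G.Subgraph | H.Connected}.ncard :=
  rfl

lemma coreIndex_le_of_injective [Finite W] {f : G →g G'} (hf : Function.Injective f) :
    coreIndex G ≤ coreIndex G' := by
  have hmaps : Subgraph.map f '' {H | H.Connected} ⊆ {K | K.Connected} :=
    Set.image_subset_iff.2 fun _ hH => subgraph_connected_map f hH
  rw [coreIndex_eq_ncard, ← Set.ncard_image_of_injective _ (subgraph_map_injective hf)]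
  exact Set.ncard_le_ncard hmaps

lemma coreIndex_add_le_coreIndex_sum [Finite V] [Finite W] :
    coreIndex G + coreIndex G' ≤ coreIndex (G ⊕g G') := by
  let l : G →g G ⊕g G' := Embedding.sumInl.toHom
  let r : G' →g G ⊕g G' := Embedding.sumInr.toHom
  have hl : Function.Injective (Subgraph.map l) := subgraph_map_injective Sum.inl_injective
  have hr : Function.Injective (Subgraph.map r) := subgraph_map_injective Sum.inr_injective
  have hdisj : Disjoint (Subgraph.map l '' {H | H.Connected})
      (Subgraph.map r '' {H | H.Connected}) := by
    rw [Set.disjoint_left]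
    rintro _ ⟨H, hH, rfl⟩ ⟨H', -, h⟩
    obtain ⟨v, hv⟩ := hH.nonempty
    obtain ⟨w, -, hw⟩ : l v ∈ (H'.map r).verts := h ▸ ⟨v, hv, rfl⟩
    exact Sum.inr_ne_inl hw
  rw [coreIndex_eq_ncard G, coreIndex_eq_ncard G', ← Set.ncard_image_of_injective _ hl,
    ← Set.ncard_image_of_injective _ hr, ← Set.ncard_union_eq hdisj]
  refine Set.ncard_le_ncard (Set.union_subset ?_ ?_)
  · exact Set.image_subset_iff.2 fun _ hH => subgraph_connected_map l hH
  · exact Set.image_subset_iff.2 fun _ hH => subgraph_connected_map r hH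

end CoreIndex

section Complete

lemma card_connected_eq_numConnectedGraphs (V : Type*) [Finite V] :
    Nat.card {G : SimpleGraph V // G.Connected} = numConnectedGraphs (Nat.card V) :=
  Nat.card_congr <| (Finite.equivFin V).simpleGraph.subtypeEquiv fun G =>
    (Iso.comap (Finite.equivFin V).symm G).connected_iff.symm

lemma numConnectedGraphs_zero : numConnectedGraphs 0 = 0 :=
  have : IsEmpty {G : SimpleGraph (Fin 0) // G.Connected} :=
    ⟨fun G => G.2.nonempty.elim Fin.elim0⟩
  Nat.card_of_isEmpty

/-- A subgraph of the complete graph on `W` is a vertex set together with an arbitrary graph on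
it. -/
def subgraphTopEquiv (W : Type*) :
    (⊤ : SimpleGraph W).Subgraph ≃ Σ s : Set W, SimpleGraph s where
  toFun H := ⟨H.verts, H.coe⟩
  invFun x :=
    { verts := x.1
      Adj := fun a b => ∃ (ha : a ∈ x.1) (hb : b ∈ x.1), x.2.Adj ⟨a, ha⟩ ⟨b, hb⟩
      adj_sub := fun ⟨_, _, h⟩ hab => h.ne (Subtype.ext hab)
      edge_vert := fun ⟨ha, _, _⟩ => ha
      symm := ⟨fun _ _ ⟨ha, hb, h⟩ => ⟨hb, ha, h.symm⟩⟩ }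
  left_inv H := by
    ext a b
    · rfl
    · exact ⟨fun ⟨_, _, h⟩ => h, fun h => ⟨h.fst_mem, h.snd_mem, h⟩⟩
  right_inv := by
    rintro ⟨s, G⟩
    refine Sigma.ext rfl (heq_of_eq ?_)
    ext a b
    exact ⟨fun ⟨_, _, h⟩ => h, fun h => ⟨a.2, b.2, h⟩⟩

lemma coreIndex_top_eq_sum_set (W : Type*) [Fintype W] :
    coreIndex (⊤ : SimpleGraph W) = ∑ s : Set W, numConnectedGraphs s.ncard := by
  let e : {x : Σ s : Set W, SimpleGraph s // x.2.Connected} ≃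
      Σ s : Set W, {G : SimpleGraph s // G.Connected} :=
    { toFun := fun x => ⟨x.1.1, x.1.2, x.2⟩
      invFun := fun x => ⟨⟨x.1, x.2.1⟩, x.2.2⟩ }
  have hconn (H : (⊤ : SimpleGraph W).Subgraph) :
      H.Connected ↔ (subgraphTopEquiv W H).2.Connected := Subgraph.connected_iff'
  rw [coreIndex, Nat.card_congr (((subgraphTopEquiv W).subtypeEquiv hconn).trans e), Nat.card_sigma]
  exact Finset.sum_congr rfl fun s _ => card_connected_eq_numConnectedGraphs s

lemma coreIndex_top (W : Type*) [Finite W] :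
    coreIndex (⊤ : SimpleGraph W) =
      ∑ i ∈ Finset.Icc 1 (Nat.card W), (Nat.card W).choose i * numConnectedGraphs i := by
  classical
  have := Fintype.ofFinite W
  calc coreIndex (⊤ : SimpleGraph W)
      = ∑ s : Set W, numConnectedGraphs s.ncard := coreIndex_top_eq_sum_set W
    _ = ∑ s ∈ (Finset.univ : Finset W).powerset, numConnectedGraphs s.card := by
      rw [Finset.powerset_univ, ← Fintype.finsetEquivSet.sum_comp]
      simp only [Fintype.finsetEquivSet_apply, Set.ncard_coe_finset]
    _ = ∑ i ∈ Finset.range (Nat.card W + 1), (Nat.card W).choose i * numConnectedGraphs i := by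
      rw [Finset.sum_powerset_apply_card, Finset.card_univ, Nat.card_eq_fintype_card]
      simp only [smul_eq_mul]
    _ = ∑ i ∈ Finset.Icc 1 (Nat.card W), (Nat.card W).choose i * numConnectedGraphs i := by
      rw [Finset.range_eq_Ico, Finset.sum_eq_sum_Ico_succ_bot (Nat.succ_pos _),
        numConnectedGraphs_zero, mul_zero, zero_add]
      rfl

end Complete

section Split

variable {V : Type*} {G : SimpleGraph V} {T : Set V}

/-- A graph whose edges are exactly the pairs of distinct vertices of `T` is the disjoint union of
the isolated vertices outside `T` and the complete graph on `T`. -/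
noncomputable def isoBotSumTop (h : ∀ u v, G.Adj u v ↔ u ∈ T ∧ v ∈ T ∧ u ≠ v) :
    G ≃g (⊥ : SimpleGraph ↥Tᶜ) ⊕g (⊤ : SimpleGraph ↥T) := by
  classical
  refine RelIso.symm ⟨(Equiv.sumComm _ _).trans (Equiv.Set.sumCompl T), ?_⟩
  rintro (⟨u, hu : u ∉ T⟩ | ⟨u, hu⟩) (⟨v, hv : v ∉ T⟩ | ⟨v, hv⟩) <;> simp [h, hu, hv]

lemma nonempty_iso_bot_sum_top_fin [Finite V] {a b : ℕ}
    (h : ∀ u v, G.Adj u v ↔ u ∈ T ∧ v ∈ T ∧ u ≠ v) (ha : Tᶜ.ncard = a) (hb : T.ncard = b) :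
    Nonempty (G ≃g ((⊥ : SimpleGraph (Fin a)) ⊕g (⊤ : SimpleGraph (Fin b)))) :=
  ⟨(isoBotSumTop h).trans <| Iso.sumCongr
    ⟨Finite.equivFinOfCardEq ha, Iff.rfl⟩ (Iso.completeGraph (Finite.equivFinOfCardEq hb))⟩

end Split

section Collapse

variable {V : Type*} {G : SimpleGraph V} {S : Set V}

lemma connected_verts_subset_eq_image_singletonSubgraph (hS : S.InjOn G.connectedComponentMk) :
    {H : G.Subgraph | H.Connected ∧ H.verts ⊆ S} = G.singletonSubgraph '' S := by
  ext H
  constructor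
  · rintro ⟨hH, hHS⟩
    obtain ⟨v, hv⟩ := hH.nonempty
    refine ⟨v, hHS hv, ((eq_singletonSubgraph_iff_verts_eq H).2 ?_).symm⟩
    exact Set.eq_singleton_iff_unique_mem.2
      ⟨hv, fun u hu => hS (hHS hu) (hHS hv) (subgraph_verts_subset_supp hH hv hu)⟩
  · rintro ⟨v, hv, rfl⟩
    exact ⟨Subgraph.singletonSubgraph_connected, Set.singleton_subset_iff.2 hv⟩

lemma singletonSubgraph_injective : Function.Injective G.singletonSubgraph :=
  fun _ _ h => Set.singleton_injective (congrArg Subgraph.verts h)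

lemma ncard_connected_verts_subset (hS : S.InjOn G.connectedComponentMk) :
    {H : G.Subgraph | H.Connected ∧ H.verts ⊆ S}.ncard = S.ncard := by
  rw [connected_verts_subset_eq_image_singletonSubgraph hS,
    Set.ncard_image_of_injective S singletonSubgraph_injective]

lemma coreIndex_bot (W : Type*) : coreIndex (⊥ : SimpleGraph W) = Nat.card W := by
  have hinj : Set.univ.InjOn (⊥ : SimpleGraph W).connectedComponentMk := fun _ _ _ _ h =>
    reachable_bot.1 (ConnectedComponent.exact h)
  rw [coreIndex_eq_ncard, ← Set.ncard_univ, ← ncard_connected_verts_subset hinj]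
  simp only [Set.subset_univ, and_true]

lemma coreIndex_eq_ncard_add_ncard [Finite V] (hS : S.InjOn G.connectedComponentMk) :
    coreIndex G = S.ncard + {H : G.Subgraph | H.Connected ∧ ¬H.verts ⊆ S}.ncard := by
  rw [coreIndex_eq_ncard, ← ncard_connected_verts_subset hS]
  exact (Set.ncard_inter_add_ncard_sdiff_eq_ncard {H : G.Subgraph | H.Connected}
    {H | H.verts ⊆ S}).symm

open Classical in
/-- The quotient map of `V` that identifies all points of `S`, the resulting point being `none`. -/
noncomputable def collapse (S : Set V) (v : V) : Option ↥Sᶜ :=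
  if h : v ∈ S then none else some ⟨v, h⟩

lemma collapse_eq_none_iff {v : V} : collapse S v = none ↔ v ∈ S := by
  simp [collapse]

lemma collapse_eq_some_iff {v : V} {a : ↥Sᶜ} : collapse S v = some a ↔ v = a := by
  unfold collapse
  split_ifs with h
  · simpa using ne_of_mem_of_not_mem h a.2
  · simp [Subtype.ext_iff]

lemma collapse_injOn_supp (hS : S.InjOn G.connectedComponentMk) (c : G.ConnectedComponent) :
    c.supp.InjOn (collapse S) := by
  intro u hu v hv huv
  cases hv' : collapse S v with
  | none =>
    exact hS (collapse_eq_none_iff.1 (huv.trans hv')) (collapse_eq_none_iff.1 hv')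
      (hu.trans hv.symm)
  | some a =>
    exact (collapse_eq_some_iff.1 (huv.trans hv')).trans (collapse_eq_some_iff.1 hv').symm

/-- `collapse S` as a graph homomorphism. When `S` contains at most one vertex of each component,
adjacent vertices are never identified, so the complete graph can serve as the target. -/
noncomputable def collapseHom (hS : S.InjOn G.connectedComponentMk) :
    G →g (⊤ : SimpleGraph (Option ↥Sᶜ)) where
  toFun := collapse S
  map_rel' {_ v} huv h := huv.ne
    (collapse_injOn_supp hS (G.connectedComponentMk v) (ConnectedComponent.sound huv.reachable)
      rfl h)

lemma injOn_map_collapseHom (hS : S.InjOn G.connectedComponentMk) :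
    {H : G.Subgraph | H.Connected ∧ ¬H.verts ⊆ S}.InjOn (Subgraph.map (collapseHom hS)) := by
  rintro H ⟨hH, hHS⟩ H' ⟨hH', -⟩ h
  obtain ⟨a, haH, haS⟩ := Set.not_subset.1 hHS
  have haH' : a ∈ H'.verts := by
    have ha : some ⟨a, haS⟩ ∈ (H'.map (collapseHom hS)).verts :=
      h ▸ ⟨a, haH, collapse_eq_some_iff.2 rfl⟩
    obtain ⟨w, hw, hwa⟩ := ha
    obtain rfl : w = a := collapse_eq_some_iff.1 hwa
    exact hw
  refine subgraph_eq_of_map_eq ((collapse_injOn_supp hS (G.connectedComponentMk a)).mono ?_) h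
  exact Set.union_subset (subgraph_verts_subset_supp hH haH) (subgraph_verts_subset_supp hH' haH')

lemma image_map_collapseHom_subset (hS : S.InjOn G.connectedComponentMk) :
    Subgraph.map (collapseHom hS) '' {H | H.Connected ∧ ¬H.verts ⊆ S} ⊆
      {K | K.Connected} \ {SimpleGraph.singletonSubgraph _ none} := by
  rintro _ ⟨H, ⟨hH, hHS⟩, rfl⟩
  refine ⟨subgraph_connected_map _ hH, fun h => hHS fun v hv => ?_⟩
  rw [Set.mem_singleton_iff, eq_singletonSubgraph_iff_verts_eq] at h
  exact collapse_eq_none_iff.1 (h.subset ⟨v, hv, rfl⟩)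

lemma ncard_connected_sdiff_singletonSubgraph_add_one [Finite V] (v : V) :
    ({H : G.Subgraph | H.Connected} \ {G.singletonSubgraph v}).ncard + 1 = coreIndex G :=
  Set.ncard_sdiff_singleton_add_one Subgraph.singletonSubgraph_connected

lemma coreIndex_add_one_le [Finite V] (hS : S.InjOn G.connectedComponentMk) :
    coreIndex G + 1 ≤ S.ncard + coreIndex (⊤ : SimpleGraph (Option ↥Sᶜ)) := by
  rw [coreIndex_eq_ncard_add_ncard hS, ← (injOn_map_collapseHom hS).ncard_image, add_assoc,
    ← ncard_connected_sdiff_singletonSubgraph_add_one none]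
  gcongr
  exacts [Set.toFinite _, image_map_collapseHom_subset hS]

section Equality

variable [Finite V]

lemma image_map_collapseHom_eq (hS : S.InjOn G.connectedComponentMk)
    (h : coreIndex G + 1 = S.ncard + coreIndex (⊤ : SimpleGraph (Option ↥Sᶜ))) :
    Subgraph.map (collapseHom hS) '' {H | H.Connected ∧ ¬H.verts ⊆ S} =
      {K | K.Connected} \ {SimpleGraph.singletonSubgraph _ none} := by
  refine Set.eq_of_subset_of_ncard_le (image_map_collapseHom_subset hS) ?_
  rw [coreIndex_eq_ncard_add_ncard hS, ← ncard_connected_sdiff_singletonSubgraph_add_one none] at h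
  rw [(injOn_map_collapseHom hS).ncard_image]
  omega

lemma exists_adj_collapse_eq (hS : S.InjOn G.connectedComponentMk)
    (h : coreIndex G + 1 = S.ncard + coreIndex (⊤ : SimpleGraph (Option ↥Sᶜ)))
    {x y : Option ↥Sᶜ} (hxy : x ≠ y) :
    ∃ u v, G.Adj u v ∧ collapse S u = x ∧ collapse S v = y := by
  have hadj : (⊤ : SimpleGraph (Option ↥Sᶜ)).Adj x y := hxy
  have hmem : SimpleGraph.subgraphOfAdj _ hadj ∈
      {K | K.Connected} \ {SimpleGraph.singletonSubgraph _ none} := by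
    refine ⟨Subgraph.subgraphOfAdj_connected hadj, fun heq => ?_⟩
    exact (congrArg (fun K => K.Adj x y) heq).mp (subgraphOfAdj_adj_self hadj)
  rw [← image_map_collapseHom_eq hS h] at hmem
  obtain ⟨H, -, hH⟩ := hmem
  obtain ⟨u, v, huv, hu, hv⟩ : (H.map (collapseHom hS)).Adj x y :=
    hH ▸ subgraphOfAdj_adj_self hadj
  exact ⟨u, v, H.adj_sub huv, hu, hv⟩

lemma adj_of_notMem_of_coreIndex_eq (hS : S.InjOn G.connectedComponentMk)
    (h : coreIndex G + 1 = S.ncard + coreIndex (⊤ : SimpleGraph (Option ↥Sᶜ)))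
    {a b : V} (ha : a ∉ S) (hb : b ∉ S) (hab : a ≠ b) : G.Adj a b := by
  obtain ⟨u, v, huv, hu, hv⟩ := exists_adj_collapse_eq hS h
    (x := some ⟨a, ha⟩) (y := some ⟨b, hb⟩) (by simpa using hab)
  rwa [collapse_eq_some_iff.1 hu, collapse_eq_some_iff.1 hv] at huv

lemma exists_mem_adj_of_coreIndex_eq (hS : S.InjOn G.connectedComponentMk)
    (h : coreIndex G + 1 = S.ncard + coreIndex (⊤ : SimpleGraph (Option ↥Sᶜ)))
    {a : V} (ha : a ∉ S) : ∃ s ∈ S, G.Adj s a := by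
  obtain ⟨s, v, hsv, hs, hv⟩ := exists_adj_collapse_eq hS h
    (x := none) (y := some ⟨a, ha⟩) (Option.some_ne_none _).symm
  rw [collapse_eq_some_iff.1 hv] at hsv
  exact ⟨s, collapse_eq_none_iff.1 hs, hsv⟩

lemma exists_mem_forall_adj_of_coreIndex_eq (hS : S.InjOn G.connectedComponentMk)
    (hne : S.Nonempty)
    (h : coreIndex G + 1 = S.ncard + coreIndex (⊤ : SimpleGraph (Option ↥Sᶜ))) :
    ∃ s ∈ S, ∀ a ∉ S, G.Adj s a := by
  by_cases hSc : ∃ a, a ∉ S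
  · obtain ⟨a, ha⟩ := hSc
    obtain ⟨s, hs, hsa⟩ := exists_mem_adj_of_coreIndex_eq hS h ha
    refine ⟨s, hs, fun b hb => ?_⟩
    obtain ⟨t, ht, htb⟩ := exists_mem_adj_of_coreIndex_eq hS h hb
    have hab : G.Reachable a b := by
      by_cases hab : a = b
      · exact hab ▸ .refl a
      · exact (adj_of_notMem_of_coreIndex_eq hS h ha hb hab).reachable
    have hst : s = t := hS hs ht <| ConnectedComponent.sound <|
      hsa.reachable.trans (hab.trans htb.symm.reachable)
    rwa [hst]
  · obtain ⟨s, hs⟩ := hne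
    exact ⟨s, hs, fun a ha => absurd ⟨a, ha⟩ hSc⟩

lemma exists_mem_adj_iff_of_coreIndex_eq (hS : S.InjOn G.connectedComponentMk)
    (hne : S.Nonempty)
    (h : coreIndex G + 1 = S.ncard + coreIndex (⊤ : SimpleGraph (Option ↥Sᶜ))) :
    ∃ s ∈ S, ∀ u v, G.Adj u v ↔ u ∈ insert s Sᶜ ∧ v ∈ insert s Sᶜ ∧ u ≠ v := by
  obtain ⟨s, hs, hsadj⟩ := exists_mem_forall_adj_of_coreIndex_eq hS hne h
  have hmem {u v : V} (huv : G.Adj u v) : u ∈ insert s Sᶜ := by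
    by_contra hu
    obtain ⟨hus, huS⟩ : u ≠ s ∧ u ∈ S := by simpa using hu
    by_cases hv : v ∈ S
    · exact huv.ne (hS huS hv (ConnectedComponent.sound huv.reachable))
    · exact hus <| hS huS hs <| ConnectedComponent.sound <|
        huv.reachable.trans (hsadj v hv).symm.reachable
  refine ⟨s, hs, fun u v => ⟨fun huv => ⟨hmem huv, hmem huv.symm, huv.ne⟩, ?_⟩⟩
  rintro ⟨rfl | hu, rfl | hv, huv⟩
  · exact absurd rfl huv
  · exact hsadj v hv
  · exact (hsadj u hu).symm
  · exact adj_of_notMem_of_coreIndex_eq hS h hu hv huv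

lemma nonempty_iso_of_coreIndex_eq (hS : S.InjOn G.connectedComponentMk) (hne : S.Nonempty)
    (h : coreIndex G + 1 = S.ncard + coreIndex (⊤ : SimpleGraph (Option ↥Sᶜ))) :
    Nonempty (G ≃g ((⊥ : SimpleGraph (Fin (S.ncard - 1))) ⊕g
      (⊤ : SimpleGraph (Fin (Sᶜ.ncard + 1))))) := by
  obtain ⟨s, hs, hadj⟩ := exists_mem_adj_iff_of_coreIndex_eq hS hne h
  refine nonempty_iso_bot_sum_top_fin hadj ?_ (Set.ncard_insert_of_notMem (· hs))
  have hcompl : (insert s Sᶜ)ᶜ = S \ {s} := by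
    rw [Set.insert_eq, Set.compl_union, compl_compl, Set.inter_comm, Set.sdiff_eq]
  rw [hcompl, Set.ncard_sdiff_singleton_of_mem hs]

end Equality

end Collapse

lemma add_coreIndex_top_le_of_iso {V I W : Type*} [Finite V] [Finite I] [Finite W]
    {G : SimpleGraph V} (e : G ≃g ((⊥ : SimpleGraph I) ⊕g (⊤ : SimpleGraph W))) :
    Nat.card I + coreIndex (⊤ : SimpleGraph W) ≤ coreIndex G :=
  calc Nat.card I + coreIndex (⊤ : SimpleGraph W)
      = coreIndex (⊥ : SimpleGraph I) + coreIndex (⊤ : SimpleGraph W) := by rw [coreIndex_bot]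
    _ ≤ coreIndex ((⊥ : SimpleGraph I) ⊕g (⊤ : SimpleGraph W)) := coreIndex_add_le_coreIndex_sum
    _ ≤ coreIndex G := coreIndex_le_of_injective (f := e.symm.toHom) e.symm.injective

/-- If `G` is a graph on `n` vertices with `k` connected components, then
`F(G) ≤ (k-1) + ∑_{i=1}^{n-k+1} C(n-k+1,i) h_i`, with equality if and only if `G` is the
disjoint union of `k-1` isolated vertices and a complete graph `K_{n-k+1}`. -/
theorem coreIndex_upper_bound_components {V : Type*} [Fintype V] (G : SimpleGraph V)
    (n k : ℕ) (hn : Fintype.card V = n) (hk : 1 ≤ k) (hkn : k ≤ n)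
    (hcomp : Nat.card G.ConnectedComponent = k) :
    coreIndex G ≤ (k - 1) +
      ∑ i ∈ Finset.Icc 1 (n - k + 1), (n - k + 1).choose i * numConnectedGraphs i ∧
    (coreIndex G = (k - 1) +
        ∑ i ∈ Finset.Icc 1 (n - k + 1), (n - k + 1).choose i * numConnectedGraphs i ↔
      Nonempty (G ≃g ((⊥ : SimpleGraph (Fin (k - 1))) ⊕g
        (⊤ : SimpleGraph (Fin (n - k + 1)))))) := by
  obtain ⟨S, hrep⟩ : ∃ S : Set V, ConnectedComponent.Represents (G := G) S Set.univ :=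
    ⟨_, ConnectedComponent.Represents.image_out Set.univ⟩
  have hS : S.ncard = k := by rw [hrep.ncard_eq, Set.ncard_univ, hcomp]
  have hSc : Sᶜ.ncard = n - k := by
    rw [Set.ncard_compl, Nat.card_eq_fintype_card, hn, hS]
  have htop : coreIndex (⊤ : SimpleGraph (Option ↥Sᶜ)) =
      ∑ i ∈ Finset.Icc 1 (n - k + 1), (n - k + 1).choose i * numConnectedGraphs i := by
    rw [coreIndex_top, Finite.card_option, Nat.card_coe_set_eq, hSc]
  have hupper := coreIndex_add_one_le hrep.injOn
  rw [← htop]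
  refine ⟨by omega, fun heq => ?_, fun ⟨e⟩ => ?_⟩
  · have hiso := nonempty_iso_of_coreIndex_eq hrep.injOn
      (Set.nonempty_of_ncard_ne_zero (by omega)) (by omega)
    rwa [hS, hSc] at hiso
  · have hlower := add_coreIndex_top_le_of_iso e
    rw [coreIndex_top, Nat.card_fin, Nat.card_fin, ← htop] at hlower
    omega
end

section
/- Let G be a connected graph on at least 2 vertices with a vertex v, and for k, l ≥ 1 let G_{k,l} be the graph obtained by attaching two new disjoint paths of lengths k and l at v. If 1 ≤ k ≤ l, then F(G_{k-1,l+1}) < F(G_{k,l}). -/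
open SimpleGraph

/-- The graph `G_{k,l}` obtained from `G` by attaching at the vertex `v` two new
disjoint pendant paths, `v v₁ … v_k` of length `k` and `v u₁ … u_l` of length `l`. -/
def attachTwoPaths {V : Type*} (G : SimpleGraph V) (v : V) (k l : ℕ) :
    SimpleGraph (V ⊕ (Fin k ⊕ Fin l)) :=
  SimpleGraph.fromRel (fun x y =>
    (∃ a b : V, x = Sum.inl a ∧ y = Sum.inl b ∧ G.Adj a b) ∨
    (∃ i : Fin k, x = Sum.inl v ∧ y = Sum.inr (Sum.inl i) ∧ (i : ℕ) = 0) ∨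
    (∃ i : Fin l, x = Sum.inl v ∧ y = Sum.inr (Sum.inr i) ∧ (i : ℕ) = 0) ∨
    (∃ i j : Fin k, x = Sum.inr (Sum.inl i) ∧ y = Sum.inr (Sum.inl j) ∧
      (j : ℕ) = (i : ℕ) + 1) ∨
    (∃ i j : Fin l, x = Sum.inr (Sum.inr i) ∧ y = Sum.inr (Sum.inr j) ∧
      (j : ℕ) = (i : ℕ) + 1))

/-!
All the graphs `G_{k,l}` are induced subgraphs of the graph obtained from `G` by attaching two rays
at `v`. If a vertex `w` is pendant at `u`, then deleting `w` is a bijection from the connected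
subgraphs containing `w`, other than the single vertex `w`, to the connected subgraphs of the rest
containing `u`. Let `f` be the number of connected subgraphs of `G` containing `v`. Shortening the
first path vertex by vertex down to `v` gives `F(G_{k+1,l}) = F(G_{k,l}) + (l + 1) f + (k + 1)`,
where `(l + 1) f` counts the connected subgraphs of `G_{0,l}` containing `v`. By symmetry,
`F(G_{k,l+1}) = F(G_{k,l}) + (k + 1) f + (l + 1)`, and hence
`F(G_{k+1,l}) - F(G_{k,l+1}) = (l - k) (f - 1)`. Finally `f > 1`, because the vertex `v` and any
edge at `v` are two different subgraphs containing `v`.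
-/

section Subgraphs

variable {V W : Type*} {G : SimpleGraph V} {M : SimpleGraph W}

theorem subgraph_comap_map {f : G →g M} (hf : Function.Injective f) (H : G.Subgraph) :
    (H.map f).comap f = H := by
  ext x y
  · simp [hf.eq_iff]
  · simpa [Relation.Map, hf.eq_iff] using H.adj_sub

theorem subgraph_map_comap (f : G ↪g M) {K : M.Subgraph} (hK : K.verts ⊆ Set.range f) :
    (K.comap f.toHom).map f.toHom = K := by
  ext x y
  · simp [Set.image_preimage_eq_of_subset hK]
  · refine ⟨?_, fun h => ?_⟩
    · rintro ⟨a, b, hab, rfl, rfl⟩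
      exact hab.2
    · obtain ⟨a, rfl⟩ := hK h.fst_mem
      obtain ⟨b, rfl⟩ := hK h.snd_mem
      exact ⟨a, b, ⟨f.map_adj_iff.1 h.adj_sub, h⟩, rfl, rfl⟩

theorem subgraph_map_connected_iff (f : Copy G M) {H : G.Subgraph} :
    (H.map f.toHom).Connected ↔ H.Connected := by
  rw [Subgraph.connected_iff', Subgraph.connected_iff', (f.isoSubgraphMap H).connected_iff]

theorem connected_deleteVerts_singleton {H : M.Subgraph} {u w : W} (hH : H.Connected)
    (hu : ∀ x, H.Adj x w ↔ x = u) : (H.deleteVerts {w}).Connected := by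
  have huw : H.Adj u w := (hu u).2 rfl
  rw [Subgraph.connected_iff', (Subgraph.coeDeleteVertsIso {w}).connected_iff, connected_iff]
  refine ⟨hH.preconnected.coe.induce_of_degree_eq_one ?_,
    ⟨⟨⟨u, huw.fst_mem⟩, huw.adj_sub.ne⟩⟩⟩
  rintro ⟨z, hz⟩ hzw x hx y hy
  obtain rfl : z = w := by simpa using hzw
  exact Subtype.ext (((hu x).1 (H.adj_symm hx)).trans ((hu y).1 (H.adj_symm hy)).symm)

theorem deleteVerts_sup_subgraphOfAdj {H : M.Subgraph} {u w : W} (huw : M.Adj u w)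
    (hu : ∀ x, H.Adj x w ↔ x = u) : H.deleteVerts {w} ⊔ M.subgraphOfAdj huw = H := by
  have hH : H.Adj u w := (hu u).2 rfl
  refine le_antisymm (sup_le Subgraph.deleteVerts_le (subgraphOfAdj_le_of_adj H hH)) ⟨?_, ?_⟩
  · intro x hx
    by_cases hxw : x = w <;> simp [hxw, hx]
  · intro x y hxy
    have := hu x
    have := hu y
    grind [Subgraph.sup_adj, Subgraph.deleteVerts_adj, subgraphOfAdj_adj, hxy.symm, hxy.fst_mem,
      hxy.snd_mem]

theorem sup_subgraphOfAdj_deleteVerts {K : M.Subgraph} {u w : W} (huw : M.Adj u w)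
    (huK : u ∈ K.verts) (hwK : w ∉ K.verts) :
    (K ⊔ M.subgraphOfAdj huw).deleteVerts {w} = K := by
  ext x y
  · grind [Subgraph.deleteVerts_verts, Subgraph.verts_sup, subgraphOfAdj_verts]
  · have : K.Adj x y → x ∈ K.verts := fun h => h.fst_mem
    have : K.Adj x y → y ∈ K.verts := fun h => h.snd_mem
    grind [Subgraph.deleteVerts_adj, Subgraph.sup_adj, subgraphOfAdj_adj, Subgraph.verts_sup]

/-- The connected subgraphs `H` of `M` whose vertex set satisfies `T ⊆ V(H) ⊆ S`. Restricting the
vertices to `S` counts connected subgraphs of the subgraph of `M` induced on `S` without changing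
the ambient graph. -/
def connectedSubgraphs (M : SimpleGraph W) (T S : Set W) : Set M.Subgraph :=
  {H | H.Connected ∧ T ⊆ H.verts ∧ H.verts ⊆ S}

theorem encard_connectedSubgraphs_image (f : G ↪g M) (T S : Set V) :
    (connectedSubgraphs M (f '' T) (f '' S)).encard = (connectedSubgraphs G T S).encard := by
  have hinj : Function.Injective (Subgraph.map f.toHom) :=
    Function.LeftInverse.injective (subgraph_comap_map f.injective)
  rw [← hinj.encard_image]
  congr 1
  ext K
  constructor
  · rintro ⟨hK, hT, hS⟩
    have hmap := subgraph_map_comap f (hS.trans (Set.image_subset_range f S))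
    refine ⟨K.comap f.toHom, ⟨?_, Set.image_subset_iff.1 hT, ?_⟩, hmap⟩
    · rwa [← subgraph_map_connected_iff f.toCopy, hmap]
    · exact (Set.preimage_mono hS).trans (f.injective.preimage_image S).subset
  · rintro ⟨H, ⟨hH, hT, hS⟩, rfl⟩
    exact ⟨(subgraph_map_connected_iff f.toCopy).2 hH, Set.image_mono hT, Set.image_mono hS⟩

theorem encard_connectedSubgraphs_insert {S T : Set W} {w : W} (hw : w ∉ S) :
    (connectedSubgraphs M T (insert w S)).encard =
      (connectedSubgraphs M T S).encard +
        (connectedSubgraphs M (insert w T) (insert w S)).encard := by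
  rw [← Set.encard_union_eq]
  · congr 1
    ext H
    simp only [connectedSubgraphs, Set.mem_union, Set.mem_ofPred_eq, Set.insert_subset_iff]
    by_cases hwH : w ∈ H.verts
    · have : ¬ H.verts ⊆ S := fun h => hw (h hwH)
      tauto
    · rw [Set.subset_insert_iff_of_notMem hwH]
      tauto
  · rw [Set.disjoint_left]
    rintro H ⟨-, -, hS⟩ ⟨-, hT, -⟩
    exact hw (hS (hT (Set.mem_insert _ _)))

end Subgraphs

/-- The number of connected subgraphs of `G` containing the vertex `v`. -/
noncomputable def rootedCoreIndex {V : Type*} (G : SimpleGraph V) (v : V) : ℕ :=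
  (connectedSubgraphs G {v} Set.univ).ncard

section CoreIndex

variable {V W : Type*} [Finite V] {G : SimpleGraph V} {M : SimpleGraph W}

theorem coe_coreIndex_eq_encard (f : G ↪g M) :
    (coreIndex G : ℕ∞) = (connectedSubgraphs M ∅ (Set.range f)).encard := by
  have : coreIndex G = (connectedSubgraphs G ∅ Set.univ).ncard := by
    simp only [connectedSubgraphs, Set.empty_subset, Set.subset_univ, and_true,
      ← Nat.card_coe_set_eq]
    rfl
  rw [← Set.image_univ, ← Set.image_empty f, encard_connectedSubgraphs_image, this,
    (Set.toFinite _).cast_ncard_eq]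

theorem coe_rootedCoreIndex_eq_encard (f : G ↪g M) (v : V) :
    (rootedCoreIndex G v : ℕ∞) = (connectedSubgraphs M {f v} (Set.range f)).encard := by
  rw [← Set.image_univ, ← Set.image_singleton, encard_connectedSubgraphs_image,
    ← (Set.toFinite _).cast_ncard_eq, rootedCoreIndex]

theorem one_lt_rootedCoreIndex {v : V} (hv : ¬ G.IsIsolated v) : 1 < rootedCoreIndex G v := by
  obtain ⟨u, huv⟩ := exists_adj_iff_not_isIsolated.2 hv
  refine (Set.one_lt_ncard (Set.toFinite _)).2 ⟨G.singletonSubgraph v,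
    ⟨Subgraph.singletonSubgraph_connected, by simp⟩, G.subgraphOfAdj huv,
    ⟨Subgraph.subgraphOfAdj_connected huv, by simp⟩, fun h => ?_⟩
  have hu : u ∈ (G.singletonSubgraph v).verts := by simp [h]
  exact huv.ne' hu

end CoreIndex

/-- The vertex `w ∉ S` is pendant at `u ∈ S`: within `insert w S`, the only neighbour of `w`
is `u`. -/
structure IsPendant {W : Type*} (M : SimpleGraph W) (S : Set W) (u w : W) : Prop where
  notMem : w ∉ S
  mem : u ∈ S
  adj_iff : ∀ x ∈ S, M.Adj x w ↔ x = u

namespace IsPendant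

variable {W : Type*} {M : SimpleGraph W} {S T : Set W} {u w : W}

theorem adj (h : IsPendant M S u w) : M.Adj u w :=
  (h.adj_iff u h.mem).2 rfl

theorem subgraph_adj_iff (h : IsPendant M S u w) {H : M.Subgraph} (hH : H.Connected)
    (hS : H.verts ⊆ insert w S) (hw : w ∈ H.verts) (hne : H ≠ M.singletonSubgraph w) (x : W) :
    H.Adj x w ↔ x = u := by
  have eq_of_adj : ∀ y, H.Adj y w → y = u := fun y hy =>
    (h.adj_iff y ((hS hy.fst_mem).resolve_left hy.adj_sub.ne)).1 hy.adj_sub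
  have : Nontrivial H.verts := by
    rw [Set.nontrivial_coe_sort, ← Set.not_subsingleton_iff]
    exact fun hsub => hne <| (eq_singletonSubgraph_iff_verts_eq H).2 <|
      hsub.eq_singleton_of_mem hw
  obtain ⟨y, hy⟩ := hH.preconnected.exists_adj_of_nontrivial ⟨w, hw⟩
  refine ⟨eq_of_adj x, ?_⟩
  rintro rfl
  exact eq_of_adj y hy.symm ▸ hy.symm

theorem bijOn_sup_subgraphOfAdj (h : IsPendant M S u w) (hT : T ⊆ S) :
    Set.BijOn (· ⊔ M.subgraphOfAdj h.adj) (connectedSubgraphs M (insert u T) S)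
      (connectedSubgraphs M (insert w T) (insert w S) \ {M.singletonSubgraph w}) := by
  have adj_iff : ∀ H ∈ connectedSubgraphs M (insert w T) (insert w S) \ {M.singletonSubgraph w},
      ∀ x, H.Adj x w ↔ x = u := fun H ⟨⟨hH, hTH, hHS⟩, hne⟩ =>
    h.subgraph_adj_iff hH hHS (hTH (Set.mem_insert _ _)) hne
  refine Set.InvOn.bijOn (f' := (·.deleteVerts {w})) ⟨?_, ?_⟩ ?_ ?_
  · rintro K ⟨-, hTK, hKS⟩
    exact sup_subgraphOfAdj_deleteVerts h.adj (hTK (Set.mem_insert _ _)) fun hw => h.notMem (hKS hw)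
  · exact fun H hH => deleteVerts_sup_subgraphOfAdj h.adj (adj_iff H hH)
  · rintro K ⟨hK, hTK, hKS⟩
    have huK : u ∈ K.verts := hTK (Set.mem_insert _ _)
    refine ⟨⟨Subgraph.connected_sup hK.preconnected
      (Subgraph.subgraphOfAdj_connected h.adj).preconnected ⟨u, huK, by simp⟩, ?_, ?_⟩, ?_⟩
    · grind [Subgraph.verts_sup, subgraphOfAdj_verts]
    · have := h.mem
      grind [Subgraph.verts_sup, subgraphOfAdj_verts]
    · intro heq
      have : u ∈ (M.singletonSubgraph w).verts := heq ▸ Or.inl huK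
      exact h.adj.ne this
  · intro H hH
    have hu := adj_iff H hH
    have huw : H.Adj u w := (hu u).2 rfl
    obtain ⟨⟨hconn, hTH, hHS⟩, -⟩ := hH
    refine ⟨connected_deleteVerts_singleton hconn hu, ?_, ?_⟩
    · have := h.notMem
      have := h.adj.ne
      have := huw.fst_mem
      grind [Subgraph.deleteVerts_verts]
    · grind [Subgraph.deleteVerts_verts]

theorem encard_connectedSubgraphs_insert_insert (h : IsPendant M S u w) (hT : T ⊆ S)
    (hne : T.Nonempty) :
    (connectedSubgraphs M (insert w T) (insert w S)).encard =
      (connectedSubgraphs M (insert u T) S).encard := by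
  have hbij := h.bijOn_sup_subgraphOfAdj hT
  rw [← hbij.injOn.encard_image, hbij.image_eq, Set.sdiff_singleton_eq_self]
  rintro ⟨-, hTw, -⟩
  obtain ⟨x, hx⟩ := hne
  obtain rfl : x = w := hTw (Or.inr hx)
  exact h.notMem (hT hx)

theorem encard_connectedSubgraphs_singleton_insert (h : IsPendant M S u w) :
    (connectedSubgraphs M {w} (insert w S)).encard = (connectedSubgraphs M {u} S).encard + 1 := by
  have hbij := h.bijOn_sup_subgraphOfAdj (Set.empty_subset S)
  simp only [insert_empty_eq] at hbij
  rw [← hbij.injOn.encard_image, hbij.image_eq, Set.encard_sdiff_singleton_add_one]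
  exact ⟨Subgraph.singletonSubgraph_connected, by simp⟩

end IsPendant

/-- The vertices `p 1, p 2, …` are attached one after the other as a path starting at `p 0 ∈ S 0`:
each step adds to the vertex set `S n` the vertex `p (n + 1)`, pendant at `p n`. -/
structure IsPendantPath {W : Type*} (M : SimpleGraph W) (S : ℕ → Set W) (p : ℕ → W) : Prop where
  isPendant : ∀ n, IsPendant M (S n) (p n) (p (n + 1))
  succ_eq : ∀ n, S (n + 1) = insert (p (n + 1)) (S n)

namespace IsPendantPath

variable {W : Type*} {M : SimpleGraph W} {S : ℕ → Set W} {p : ℕ → W} {T : Set W}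

theorem monotone (h : IsPendantPath M S p) : Monotone S :=
  monotone_nat_of_le_succ fun n => h.succ_eq n ▸ Set.subset_insert _ _

theorem encard_connectedSubgraphs_singleton_endpoint (h : IsPendantPath M S p) (n : ℕ) :
    (connectedSubgraphs M {p n} (S n)).encard = (connectedSubgraphs M {p 0} (S 0)).encard + n := by
  induction n with
  | zero => simp
  | succ n ih =>
    rw [h.succ_eq, (h.isPendant n).encard_connectedSubgraphs_singleton_insert, ih, add_assoc,
      Nat.cast_succ]

theorem encard_connectedSubgraphs_insert_endpoint (h : IsPendantPath M S p) (hT : T ⊆ S 0)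
    (hne : T.Nonempty) (n : ℕ) :
    (connectedSubgraphs M (insert (p n) T) (S n)).encard =
      (connectedSubgraphs M (insert (p 0) T) (S 0)).encard := by
  induction n with
  | zero => rfl
  | succ n ih =>
    rw [h.succ_eq, (h.isPendant n).encard_connectedSubgraphs_insert_insert
      (hT.trans (h.monotone n.zero_le)) hne, ih]

theorem encard_connectedSubgraphs (h : IsPendantPath M S p) (hT : T ⊆ S 0)
    (hne : T.Nonempty) (n : ℕ) :
    (connectedSubgraphs M T (S n)).encard =
      (connectedSubgraphs M T (S 0)).encard +
        n * (connectedSubgraphs M (insert (p 0) T) (S 0)).encard := by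
  induction n with
  | zero => simp
  | succ n ih =>
    rw [h.succ_eq, encard_connectedSubgraphs_insert (h.isPendant n).notMem, ← h.succ_eq,
      h.encard_connectedSubgraphs_insert_endpoint hT hne, ih, Nat.cast_succ, add_one_mul, add_assoc]

theorem encard_connectedSubgraphs_singleton_zero (h : IsPendantPath M S p) (n : ℕ) :
    (connectedSubgraphs M {p 0} (S n)).encard =
      (n + 1) * (connectedSubgraphs M {p 0} (S 0)).encard := by
  have hp : {p 0} ⊆ S 0 := Set.singleton_subset_iff.2 (h.isPendant 0).mem
  rw [h.encard_connectedSubgraphs hp (Set.singleton_nonempty _), Set.pair_eq_singleton, add_comm,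
    add_one_mul]

theorem encard_connectedSubgraphs_empty_succ (h : IsPendantPath M S p) (n : ℕ) :
    (connectedSubgraphs M ∅ (S (n + 1))).encard =
      (connectedSubgraphs M ∅ (S n)).encard +
        ((connectedSubgraphs M {p 0} (S 0)).encard + (n + 1)) := by
  rw [h.succ_eq, encard_connectedSubgraphs_insert (h.isPendant n).notMem, ← h.succ_eq,
    insert_empty_eq, h.encard_connectedSubgraphs_singleton_endpoint, Nat.cast_succ]

end IsPendantPath

section AttachTwoRays

variable {V : Type*}

/-- The vertices of the first ray of `attachTwoRays G v`, starting at `v`. -/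
def leftRay (v : V) : ℕ → V ⊕ (ℕ ⊕ ℕ)
  | 0 => Sum.inl v
  | n + 1 => Sum.inr (Sum.inl n)

/-- The vertices of the second ray of `attachTwoRays G v`, starting at `v`. -/
def rightRay (v : V) : ℕ → V ⊕ (ℕ ⊕ ℕ)
  | 0 => Sum.inl v
  | n + 1 => Sum.inr (Sum.inr n)

/-- The graph obtained from `G` by attaching two infinite paths at `v`. It contains every
`attachTwoPaths G v k l` as an induced subgraph, so that these graphs, whose vertex types depend on
`k` and `l`, can be compared inside one ambient graph. -/
def attachTwoRays (G : SimpleGraph V) (v : V) : SimpleGraph (V ⊕ (ℕ ⊕ ℕ)) :=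
  SimpleGraph.fromRel fun x y =>
    (∃ a b, x = Sum.inl a ∧ y = Sum.inl b ∧ G.Adj a b) ∨
    (x = Sum.inl v ∧ (y = Sum.inr (Sum.inl 0) ∨ y = Sum.inr (Sum.inr 0))) ∨
    (∃ n, x = Sum.inr (Sum.inl n) ∧ y = Sum.inr (Sum.inl (n + 1))) ∨
    (∃ n, x = Sum.inr (Sum.inr n) ∧ y = Sum.inr (Sum.inr (n + 1)))

/-- The vertices of `attachTwoRays G v` that belong to `attachTwoPaths G v k l`. -/
def attachTwoPathsVerts (V : Type*) (k l : ℕ) : Set (V ⊕ (ℕ ⊕ ℕ)) :=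
  Set.range Sum.inl ∪ Sum.inr '' (Sum.inl '' Set.Iio k ∪ Sum.inr '' Set.Iio l)

/-- The inclusion of `G` as an induced subgraph of `attachTwoRays G v`. -/
def embeddingAttachTwoRays (G : SimpleGraph V) (v : V) : G ↪g attachTwoRays G v where
  toFun := Sum.inl
  inj' := Sum.inl_injective
  map_rel_iff' := by
    intro a b
    simpa [attachTwoRays, G.adj_comm b a] using SimpleGraph.Adj.ne

/-- The inclusion of `attachTwoPaths G v k l` as an induced subgraph of `attachTwoRays G v`. -/
def attachTwoPathsEmbedding (G : SimpleGraph V) (v : V) (k l : ℕ) :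
    attachTwoPaths G v k l ↪g attachTwoRays G v where
  toFun := Sum.map id (Sum.map Fin.val Fin.val)
  inj' := Function.injective_id.sumMap (Fin.val_injective.sumMap Fin.val_injective)
  map_rel_iff' := by
    rintro (a | a | a) (b | b | b) <;> simp [attachTwoPaths, attachTwoRays, Fin.val_inj]

theorem range_embeddingAttachTwoRays (G : SimpleGraph V) (v : V) :
    Set.range (embeddingAttachTwoRays G v) = attachTwoPathsVerts V 0 0 := by
  simp [embeddingAttachTwoRays, attachTwoPathsVerts]

theorem range_attachTwoPathsEmbedding (G : SimpleGraph V) (v : V) (k l : ℕ) :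
    Set.range (attachTwoPathsEmbedding G v k l) = attachTwoPathsVerts V k l := by
  ext (x | x | x) <;> simp [attachTwoPathsEmbedding, attachTwoPathsVerts, Fin.exists_iff]

theorem isPendantPath_leftRay (G : SimpleGraph V) (v : V) (l : ℕ) :
    IsPendantPath (attachTwoRays G v) (attachTwoPathsVerts V · l) (leftRay v) where
  isPendant k :=
    { notMem := by simp [leftRay, attachTwoPathsVerts]
      mem := by cases k <;> simp [leftRay, attachTwoPathsVerts]
      adj_iff := by
        cases k with
        | zero => simp [leftRay, attachTwoPathsVerts, attachTwoRays]
        | succ n => simpa [leftRay, attachTwoPathsVerts, attachTwoRays] using fun m hm => by lia }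
  succ_eq k := by
    have hIio : Set.Iio (k + 1) = insert k (Set.Iio k) := Order.Iio_succ_eq_insert k
    simp only [leftRay, attachTwoPathsVerts, hIio, Set.image_insert_eq, Set.insert_union,
      Set.union_insert]

theorem isPendantPath_rightRay (G : SimpleGraph V) (v : V) (k : ℕ) :
    IsPendantPath (attachTwoRays G v) (attachTwoPathsVerts V k) (rightRay v) where
  isPendant l :=
    { notMem := by simp [rightRay, attachTwoPathsVerts]
      mem := by cases l <;> simp [rightRay, attachTwoPathsVerts]
      adj_iff := by
        cases l with
        | zero => simp [rightRay, attachTwoPathsVerts, attachTwoRays]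
        | succ n => simpa [rightRay, attachTwoPathsVerts, attachTwoRays] using fun m hm => by lia }
  succ_eq l := by
    have hIio : Set.Iio (l + 1) = insert l (Set.Iio l) := Order.Iio_succ_eq_insert l
    simp only [rightRay, attachTwoPathsVerts, hIio, Set.image_insert_eq, Set.union_insert]

variable [Finite V] (G : SimpleGraph V) (v : V) (k l : ℕ)

theorem coe_coreIndex_attachTwoPaths :
    (coreIndex (attachTwoPaths G v k l) : ℕ∞) =
      (connectedSubgraphs (attachTwoRays G v) ∅ (attachTwoPathsVerts V k l)).encard := by
  rw [coe_coreIndex_eq_encard (attachTwoPathsEmbedding G v k l), range_attachTwoPathsEmbedding]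

theorem coe_rootedCoreIndex_eq_encard_attachTwoRays :
    (rootedCoreIndex G v : ℕ∞) =
      (connectedSubgraphs (attachTwoRays G v) {Sum.inl v} (attachTwoPathsVerts V 0 0)).encard := by
  rw [coe_rootedCoreIndex_eq_encard (embeddingAttachTwoRays G v), range_embeddingAttachTwoRays]
  rfl

theorem encard_connectedSubgraphs_attachTwoPathsVerts_zero_right :
    (connectedSubgraphs (attachTwoRays G v) {Sum.inl v} (attachTwoPathsVerts V k 0)).encard =
      (k + 1) * rootedCoreIndex G v := by
  rw [coe_rootedCoreIndex_eq_encard_attachTwoRays]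
  exact (isPendantPath_leftRay G v 0).encard_connectedSubgraphs_singleton_zero k

theorem encard_connectedSubgraphs_attachTwoPathsVerts_zero_left :
    (connectedSubgraphs (attachTwoRays G v) {Sum.inl v} (attachTwoPathsVerts V 0 l)).encard =
      (l + 1) * rootedCoreIndex G v := by
  rw [coe_rootedCoreIndex_eq_encard_attachTwoRays]
  exact (isPendantPath_rightRay G v 0).encard_connectedSubgraphs_singleton_zero l

theorem coreIndex_attachTwoPaths_succ_left :
    coreIndex (attachTwoPaths G v (k + 1) l) =
      coreIndex (attachTwoPaths G v k l) + ((l + 1) * rootedCoreIndex G v + (k + 1)) := by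
  have h := (isPendantPath_leftRay G v l).encard_connectedSubgraphs_empty_succ k
  rw [leftRay, encard_connectedSubgraphs_attachTwoPathsVerts_zero_left] at h
  simp only [← coe_coreIndex_attachTwoPaths] at h
  exact_mod_cast h

theorem coreIndex_attachTwoPaths_succ_right :
    coreIndex (attachTwoPaths G v k (l + 1)) =
      coreIndex (attachTwoPaths G v k l) + ((k + 1) * rootedCoreIndex G v + (l + 1)) := by
  have h := (isPendantPath_rightRay G v k).encard_connectedSubgraphs_empty_succ l
  rw [rightRay, encard_connectedSubgraphs_attachTwoPathsVerts_zero_right] at h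
  simp only [← coe_coreIndex_attachTwoPaths] at h
  exact_mod_cast h

end AttachTwoRays

theorem coreIndex_graft_lt_general {V : Type*} [Finite V] (G : SimpleGraph V) (v : V)
    (hv : ¬ G.IsIsolated v) (k l : ℕ) (hk : 1 ≤ k) (hkl : k ≤ l) :
    coreIndex (attachTwoPaths G v (k - 1) (l + 1)) <
      coreIndex (attachTwoPaths G v k l) := by
  obtain ⟨m, rfl⟩ := Nat.exists_eq_add_of_le' hk
  have hroot := one_lt_rootedCoreIndex hv
  rw [Nat.add_sub_cancel, coreIndex_attachTwoPaths_succ_left, coreIndex_attachTwoPaths_succ_right]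
  nlinarith

/-- Grafting an edge decreases the core index: for a connected graph `G` on at least two
vertices, a vertex `v` of `G`, and `1 ≤ k ≤ l`, we have
`F(G_{k-1, l+1}) < F(G_{k, l})`. -/
theorem coreIndex_graft_lt {V : Type*} [Fintype V] (G : SimpleGraph V) (v : V)
    (hcard : 2 ≤ Fintype.card V) (hconn : G.Connected) (k l : ℕ)
    (hk : 1 ≤ k) (hkl : k ≤ l) :
    coreIndex (attachTwoPaths G v (k - 1) (l + 1)) <
    coreIndex (attachTwoPaths G v k l) := by
  have := Fintype.one_lt_card_iff_nontrivial.1 hcard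
  exact coreIndex_graft_lt_general G v (hconn.preconnected.not_isIsolated v) k l hk hkl
end

section
/- Let G be a connected graph on n ≥ 2 vertices with vertices u, v such that f_G(u) ≥ f_G(v), and for n_1, n_2 ≥ 1 let G_{uv}(n_1,n_2) be obtained by attaching n_1 new pendant vertices at u and n_2 at v. Then F(G_{uv}(n_1+n_2, 0)) > F(G_{uv}(n_1, n_2)). -/
open SimpleGraph

/-- `numContaining G v`: the number of connected subgraphs of `G` containing `v`. -/
noncomputable def numContaining {V : Type*} (G : SimpleGraph V) (v : V) : ℕ :=
  Nat.card {H : G.Subgraph // H.Connected ∧ v ∈ H.verts}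

/-- The graph `G_{uv}(n₁, n₂)` obtained from `G` by attaching `n₁` new pendant vertices
at `u` and `n₂` new pendant vertices at `v`. -/
def attachPendants {V : Type*} (G : SimpleGraph V) (u v : V) (n₁ n₂ : ℕ) :
    SimpleGraph (V ⊕ (Fin n₁ ⊕ Fin n₂)) :=
  SimpleGraph.fromRel (fun x y =>
    (∃ a b : V, x = Sum.inl a ∧ y = Sum.inl b ∧ G.Adj a b) ∨
    (∃ i : Fin n₁, x = Sum.inl u ∧ y = Sum.inr (Sum.inl i)) ∨
    (∃ i : Fin n₂, x = Sum.inl v ∧ y = Sum.inr (Sum.inr i)))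

/-!
Attach leaves to `G` along any map `p : P → V`. A connected subgraph of the resulting graph is
either a single leaf, or a connected subgraph `H` of `G` together with an arbitrary set of leaves
attached to vertices of `H`; hence their number is `|P| + ∑ H, 2 ^ |p ⁻¹' H|`.

Moving all leaves from `v` to `u` changes only the terms of those `H` containing exactly one of `u`
and `v`. If `b` of them contain `u` only and `c` contain `v` only, the sum grows by
`(2 ^ n₂ - 1) * (2 ^ n₁ * b - c)`. This is positive: the hypothesis on `u` and `v` says `c ≤ b`, and
`b ≥ 1` because of the subgraph `{u}`.
-/

section Connectivity

variable {V W : Type*} {G : SimpleGraph V} {G' : SimpleGraph W}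

lemma connected_of_surjective_of_adj_imp_reachable (hG : G.Connected) {f : V → W}
    (hf : f.Surjective) (h : ∀ a b, G.Adj a b → G'.Reachable (f a) (f b)) : G'.Connected := by
  have := hG.nonempty.map f
  refine ⟨hf.forall₂.2 fun a b => ?_⟩
  simp only [reachable_iff_reflTransGen] at h ⊢
  exact Relation.ReflTransGen.lift' f h a b ((reachable_iff_reflTransGen a b).1 (hG a b))

end Connectivity

/-- The graph obtained from `G` by attaching, for each `i : P`, a new pendant vertex `Sum.inr i` at
the vertex `p i`. It puts all the graphs `attachPendants G u v n₁ n₂` on the same footing. -/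
def attachLeaves {V P : Type*} (G : SimpleGraph V) (p : P → V) : SimpleGraph (V ⊕ P) where
  Adj
    | .inl a, .inl b => G.Adj a b
    | .inl a, .inr i => p i = a
    | .inr i, .inl a => p i = a
    | .inr _, .inr _ => False
  symm := ⟨by rintro (a | i) (b | j) h; exacts [G.adj_symm h, h, h, h]⟩
  loopless := ⟨by rintro (a | i) h; exacts [G.irrefl h, h]⟩

lemma attachPendants_eq_attachLeaves {V : Type*} (G : SimpleGraph V) (u v : V) (n₁ n₂ : ℕ) :
    attachPendants G u v n₁ n₂ = attachLeaves G (Sum.elim (fun _ => u) (fun _ => v)) := by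
  have ne_and_adj_or_adj (a b : V) : ¬a = b ∧ (G.Adj a b ∨ G.Adj b a) ↔ G.Adj a b := by
    rw [G.adj_comm b a, or_self]
    exact and_iff_right_of_imp Adj.ne
  ext x y
  rcases x with a | i | i <;> rcases y with b | j | j <;>
    simp [attachPendants, attachLeaves, ne_and_adj_or_adj, eq_comm]

namespace attachLeaves

variable {V P : Type*} {G : SimpleGraph V} {p : P → V}

/-- The part of a subgraph of `attachLeaves G p` that lies in `G`. -/
def core (K : (attachLeaves G p).Subgraph) : G.Subgraph :=
  K.comap ⟨Sum.inl, id⟩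

/-- The set of attached leaves that belong to a subgraph of `attachLeaves G p`. -/
def leaves (K : (attachLeaves G p).Subgraph) : Set P :=
  Sum.inr ⁻¹' K.verts

/-- The subgraph of `attachLeaves G p` made of a subgraph `H` of `G` and a set `S` of leaves
attached to `H`, together with the edges joining them to `H`. -/
def extend (H : G.Subgraph) {S : Set P} (hS : S ⊆ p ⁻¹' H.verts) :
    (attachLeaves G p).Subgraph where
  verts := {x | Sum.elim (· ∈ H.verts) (· ∈ S) x}
  Adj
    | .inl a, .inl b => H.Adj a b
    | .inl a, .inr i => p i = a ∧ i ∈ S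
    | .inr i, .inl a => p i = a ∧ i ∈ S
    | .inr _, .inr _ => False
  adj_sub := by rintro (a | i) (b | j) h; exacts [H.adj_sub h, h.1, h.1, h]
  edge_vert := by
    rintro (a | i) (b | j) h
    exacts [H.edge_vert h, h.1 ▸ hS h.2, h.2, h.elim]
  symm := ⟨by rintro (a | i) (b | j) h; exacts [H.adj_symm h, h, h, h]⟩

lemma core_adj {K : (attachLeaves G p).Subgraph} {a b : V} :
    (core K).Adj a b ↔ K.Adj (.inl a) (.inl b) :=
  ⟨fun h => h.2, fun h => ⟨K.adj_sub h, h⟩⟩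

lemma core_extend (H : G.Subgraph) {S : Set P} (hS : S ⊆ p ⁻¹' H.verts) :
    core (extend H hS) = H := by
  ext a b
  exacts [Iff.rfl, core_adj]

lemma leaves_extend (H : G.Subgraph) {S : Set P} (hS : S ⊆ p ⁻¹' H.verts) :
    leaves (extend H hS) = S :=
  rfl

lemma extend_inj {H H' : G.Subgraph} {S S' : Set P} {hS : S ⊆ p ⁻¹' H.verts}
    {hS' : S' ⊆ p ⁻¹' H'.verts} : extend H hS = extend H' hS' ↔ H = H' ∧ S = S' := by
  refine ⟨fun h => ⟨?_, ?_⟩, ?_⟩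
  · rw [← core_extend H hS, h, core_extend]
  · rw [← leaves_extend H hS, h, leaves_extend]
  · rintro ⟨rfl, rfl⟩
    rfl

lemma connected_extend {H : G.Subgraph} (hH : H.Connected) {S : Set P}
    (hS : S ⊆ p ⁻¹' H.verts) : (extend H hS).Connected := by
  let inclusion : H.coe →g (extend H hS).coe := ⟨fun a => ⟨.inl a, a.2⟩, id⟩
  obtain ⟨a, ha⟩ := hH.nonempty
  have reachable_inl (b : V) (hb : b ∈ H.verts) :
      (extend H hS).coe.Reachable (inclusion ⟨a, ha⟩) (inclusion ⟨b, hb⟩) :=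
    (hH.coe ⟨a, ha⟩ ⟨b, hb⟩).map inclusion
  rw [Subgraph.connected_iff', connected_iff_exists_forall_reachable]
  refine ⟨inclusion ⟨a, ha⟩, ?_⟩
  rintro ⟨b | i, hx⟩
  · exact reachable_inl b hx
  · exact (reachable_inl (p i) (hS hx)).trans (Adj.reachable ⟨rfl, hx⟩)

section Connected

variable {K : (attachLeaves G p).Subgraph}

lemma adj_of_inr_mem (hK : K.Connected) (hne : (core K).verts.Nonempty) {i : P}
    (hi : .inr i ∈ K.verts) : K.Adj (.inr i) (.inl (p i)) := by
  obtain ⟨a, ha⟩ := hne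
  have : Nontrivial K.verts := ⟨⟨.inl a, ha⟩, ⟨.inr i, hi⟩, by simp [Subtype.ext_iff]⟩
  obtain ⟨b | j, h⟩ := hK.preconnected.exists_adj_of_nontrivial ⟨.inr i, hi⟩
  · obtain rfl : p i = b := K.adj_sub h
    exact h
  · exact (K.adj_sub h).elim

lemma leaves_subset (hK : K.Connected) (hne : (core K).verts.Nonempty) :
    leaves K ⊆ p ⁻¹' (core K).verts :=
  fun _ hi => K.edge_vert (adj_of_inr_mem hK hne hi).symm

lemma connected_core (hK : K.Connected) (hne : (core K).verts.Nonempty) :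
    (core K).Connected := by
  let collapse : K.verts → (core K).verts
    | ⟨.inl a, ha⟩ => ⟨a, ha⟩
    | ⟨.inr i, hi⟩ => ⟨p i, leaves_subset hK hne hi⟩
  refine ⟨connected_of_surjective_of_adj_imp_reachable hK.coe (f := collapse)
    (fun a => ⟨⟨.inl a, a.2⟩, rfl⟩) ?_⟩
  rintro ⟨a | i, hx⟩ ⟨b | j, hy⟩ hxy
  · exact Adj.reachable (core_adj.2 hxy)
  · obtain rfl : p j = a := K.adj_sub hxy
    rfl
  · obtain rfl : p i = b := K.adj_sub hxy
    rfl
  · exact (K.adj_sub hxy).elim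

lemma extend_core_leaves (hK : K.Connected) (hne : (core K).verts.Nonempty) :
    extend (core K) (leaves_subset hK hne) = K := by
  have adj_iff (i : P) (a : V) : p i = a ∧ i ∈ leaves K ↔ K.Adj (.inr i) (.inl a) :=
    ⟨fun h => h.1 ▸ adj_of_inr_mem hK hne h.2, fun h => ⟨K.adj_sub h, K.edge_vert h⟩⟩
  ext x y
  · cases x <;> rfl
  · rcases x with a | i <;> rcases y with b | j
    · exact core_adj
    · exact (adj_iff j a).trans (K.adj_comm _ _)
    · exact adj_iff i b
    · exact ⟨False.elim, K.adj_sub⟩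

lemma exists_eq_singletonSubgraph (hK : K.Connected) (hempty : ¬ (core K).verts.Nonempty) :
    ∃ i, K = (attachLeaves G p).singletonSubgraph (.inr i) := by
  have notMem_inl (a : V) : .inl a ∉ K.verts := fun ha => hempty ⟨a, ha⟩
  obtain ⟨a | i, hx⟩ := hK.nonempty
  · exact absurd hx (notMem_inl a)
  refine ⟨i, (eq_singletonSubgraph_iff_verts_eq K).2 ?_⟩
  refine (Set.subsingleton_iff_singleton hx).1 (Set.not_nontrivial_iff.1 fun hnontriv => ?_)
  have := hnontriv.coe_sort
  obtain ⟨b | j, h⟩ := hK.preconnected.exists_adj_of_nontrivial ⟨.inr i, hx⟩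
  · exact notMem_inl b (K.edge_vert h.symm)
  · exact K.adj_sub h

end Connected

variable (G p) in
/-- The parametrization of the connected subgraphs of `attachLeaves G p` by the single leaves and by
the pairs of a connected subgraph `H` of `G` and a set of leaves attached to `H`. -/
def ofLeafOrExtension :
    P ⊕ (Σ H : {H : G.Subgraph // H.Connected}, 𝒫 (p ⁻¹' H.1.verts)) →
      {K : (attachLeaves G p).Subgraph // K.Connected}
  | .inl i => ⟨_, Subgraph.singletonSubgraph_connected (v := .inr i)⟩
  | .inr ⟨H, S⟩ => ⟨extend H.1 S.2, connected_extend H.2 S.2⟩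

lemma singletonSubgraph_ne_extend (i : P) {H : G.Subgraph} (hH : H.Connected) {S : Set P}
    (hS : S ⊆ p ⁻¹' H.verts) :
    (attachLeaves G p).singletonSubgraph (.inr i) ≠ extend H hS := by
  intro h
  obtain ⟨a, ha⟩ := hH.nonempty
  have hmem : .inl a ∈ (extend H hS).verts := ha
  simp [← h] at hmem

lemma ofLeafOrExtension_injective : Function.Injective (ofLeafOrExtension G p) := by
  rintro (i | ⟨⟨H, hH⟩, S, hS⟩) (j | ⟨⟨H', hH'⟩, S', hS'⟩) h <;>
    replace h := congrArg Subtype.val h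
  · simpa [ofLeafOrExtension] using congrArg Subgraph.verts h
  · exact (singletonSubgraph_ne_extend i hH' hS' h).elim
  · exact (singletonSubgraph_ne_extend j hH hS h.symm).elim
  · change extend H hS = extend H' hS' at h
    obtain ⟨rfl, rfl⟩ := extend_inj.1 h
    rfl

lemma ofLeafOrExtension_surjective : Function.Surjective (ofLeafOrExtension G p) := by
  rintro ⟨K, hK⟩
  by_cases hne : (core K).verts.Nonempty
  · exact ⟨.inr ⟨⟨core K, connected_core hK hne⟩, leaves K, leaves_subset hK hne⟩,
      Subtype.ext (extend_core_leaves hK hne)⟩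
  · obtain ⟨i, rfl⟩ := exists_eq_singletonSubgraph hK hne
    exact ⟨.inl i, rfl⟩

end attachLeaves

lemma coreIndex_attachLeaves {V P : Type*} [Finite P] (G : SimpleGraph V) (p : P → V)
    [Fintype {H : G.Subgraph // H.Connected}] :
    coreIndex (attachLeaves G p) =
      Nat.card P + ∑ H : {H : G.Subgraph // H.Connected}, 2 ^ (p ⁻¹' H.1.verts).ncard := by
  rw [coreIndex, ← Nat.card_eq_of_bijective _ ⟨attachLeaves.ofLeafOrExtension_injective,
    attachLeaves.ofLeafOrExtension_surjective⟩, Nat.card_sum, Nat.card_sigma]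
  simp only [Nat.card_coe_set_eq, Set.ncard_powerset _ (Set.toFinite _)]

open Classical in
lemma ncard_preimage_sumElim_const {α β V : Type*} [Finite α] [Finite β] (u v : V) (s : Set V) :
    (Sum.elim (fun _ : α => u) (fun _ : β => v) ⁻¹' s).ncard =
      (if u ∈ s then Nat.card α else 0) + (if v ∈ s then Nat.card β else 0) := by
  rw [← Nat.card_coe_set_eq, Nat.card_congr Equiv.subtypeSum, Nat.card_sum]
  by_cases hu : u ∈ s <;> by_cases hv : v ∈ s <;> simp [hu, hv]

open Classical in
lemma coreIndex_attachPendants {V : Type*} (G : SimpleGraph V) (u v : V) (n₁ n₂ : ℕ)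
    [Fintype {H : G.Subgraph // H.Connected}] :
    coreIndex (attachPendants G u v n₁ n₂) = n₁ + n₂ +
      ∑ H : {H : G.Subgraph // H.Connected},
        2 ^ ((if u ∈ H.1.verts then n₁ else 0) + (if v ∈ H.1.verts then n₂ else 0)) := by
  rw [attachPendants_eq_attachLeaves, coreIndex_attachLeaves]
  simp only [ncard_preimage_sumElim_const, Nat.card_sum, Nat.card_fin]

open Classical in
lemma numContaining_eq_card_filter {V : Type*} (G : SimpleGraph V) (v : V)
    [Fintype {H : G.Subgraph // H.Connected}] :
    numContaining G v = (Finset.univ.filter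
      fun H : {H : G.Subgraph // H.Connected} => v ∈ H.1.verts).card := by
  rw [numContaining, ← Fintype.card_subtype, ← Nat.card_eq_fintype_card]
  exact Nat.card_congr (Equiv.subtypeSubtypeEquivSubtypeInter _ _).symm

section Exchange

variable {ι R : Type*} [Fintype ι] [DecidableEq ι] {s t : Finset ι}

lemma sum_pow_ite_sub_sum_pow_ite [CommRing R] (x : R) (m n : ℕ) :
    ∑ i, x ^ (if i ∈ s then m + n else 0) -
        ∑ i, x ^ ((if i ∈ s then m else 0) + (if i ∈ t then n else 0)) =
      (x ^ n - 1) * (x ^ m * (s \ t).card - (t \ s).card) := by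
  have termwise (i : ι) : x ^ (if i ∈ s then m + n else 0) -
      x ^ ((if i ∈ s then m else 0) + (if i ∈ t then n else 0)) =
      (x ^ n - 1) * (x ^ m * (if i ∈ s \ t then 1 else 0) - (if i ∈ t \ s then 1 else 0)) := by
    by_cases hs : i ∈ s <;> by_cases ht : i ∈ t <;>
      simp [hs, ht, pow_add, mul_sub_one, mul_comm]
  rw [← Finset.sum_sub_distrib, Finset.sum_congr rfl fun i _ => termwise i, ← Finset.mul_sum,
    Finset.sum_sub_distrib, ← Finset.mul_sum]
  simp only [Finset.sum_boole, Finset.filter_univ_mem]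

lemma sum_pow_ite_lt_sum_pow_ite [CommRing R] [LinearOrder R] [IsStrictOrderedRing R] {x : R}
    (hx : 1 < x) (hst : t.card ≤ s.card) (hne : (s \ t).Nonempty) {m n : ℕ} (hm : m ≠ 0)
    (hn : n ≠ 0) :
    ∑ i, x ^ ((if i ∈ s then m else 0) + (if i ∈ t then n else 0)) <
      ∑ i, x ^ (if i ∈ s then m + n else 0) := by
  have hcard : ((t \ s).card : R) ≤ (s \ t).card :=
    mod_cast Finset.card_sdiff_le_card_sdiff_iff.2 hst
  have hpos : (0 : R) < (s \ t).card := mod_cast hne.card_pos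
  rw [← sub_pos, sum_pow_ite_sub_sum_pow_ite]
  refine mul_pos (sub_pos.2 (one_lt_pow₀ hx hn)) (sub_pos.2 ?_)
  exact hcard.trans_lt (lt_mul_of_one_lt_left hpos (one_lt_pow₀ hx hm))

end Exchange

theorem coreIndex_attachPendants_lt_general {V : Type*} [Finite V] {G : SimpleGraph V} {u v : V}
    (huv : u ≠ v) (hf : numContaining G v ≤ numContaining G u) {n₁ n₂ : ℕ} (h₁ : 1 ≤ n₁)
    (h₂ : 1 ≤ n₂) :
    coreIndex (attachPendants G u v n₁ n₂) < coreIndex (attachPendants G u v (n₁ + n₂) 0) := by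
  classical
  have : Fintype {H : G.Subgraph // H.Connected} := Fintype.ofFinite _
  let containing (w : V) : Finset {H : G.Subgraph // H.Connected} := {H | w ∈ H.1.verts}
  have hcard : (containing v).card ≤ (containing u).card := by
    simpa only [numContaining_eq_card_filter] using hf
  have hne : (containing u \ containing v).Nonempty :=
    ⟨⟨G.singletonSubgraph u, Subgraph.singletonSubgraph_connected⟩,
      by simp [containing, huv.symm]⟩
  have hlt := sum_pow_ite_lt_sum_pow_ite (x := (2 : ℤ)) one_lt_two hcard hne
    (Nat.one_le_iff_ne_zero.1 h₁) (Nat.one_le_iff_ne_zero.1 h₂)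
  simp only [containing, Finset.mem_filter_univ] at hlt
  simp only [coreIndex_attachPendants, ite_self, add_zero]
  exact Nat.add_lt_add_left (mod_cast hlt) _

/-- If `G` is connected on at least two vertices, `u, v` are vertices with
`f_G(u) ≥ f_G(v)`, and `n₁, n₂ ≥ 1`, then
`F(G_{uv}(n₁ + n₂, 0)) > F(G_{uv}(n₁, n₂))`. -/
theorem coreIndex_attachPendants_lt {V : Type*} [Fintype V] (G : SimpleGraph V)
    (u v : V) (huv : u ≠ v) (hcard : 2 ≤ Fintype.card V) (hconn : G.Connected)
    (hf : numContaining G v ≤ numContaining G u) (n₁ n₂ : ℕ)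
    (h₁ : 1 ≤ n₁) (h₂ : 1 ≤ n₂) :
    coreIndex (attachPendants G u v n₁ n₂) <
    coreIndex (attachPendants G u v (n₁ + n₂) 0) :=
  coreIndex_attachPendants_lt_general huv hf h₁ h₂
end

section
/- For 3 ≤ g < n, among all unicyclic graphs on n vertices with girth g, the lollipop graph U^l_{n,g} uniquely minimizes the core index, and F(U^l_{n,g}) = ((n−g)/2)(n + g^2 + 3) + g^2 + 1. -/
open SimpleGraph

/-- The lollipop graph `U^l_{n,g}`: the cycle `C_g` with a pendant path on `n - g`
vertices attached to the cycle vertex `0`. -/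
def lollipop (n g : ℕ) : SimpleGraph (Fin g ⊕ Fin (n - g)) :=
  SimpleGraph.fromRel (fun x y =>
    (∃ a b : Fin g, x = Sum.inl a ∧ y = Sum.inl b ∧ (cycleGraph g).Adj a b) ∨
    (∃ (a : Fin g) (i : Fin (n - g)), x = Sum.inl a ∧ (a : ℕ) = 0 ∧ y = Sum.inr i ∧
      (i : ℕ) = 0) ∨
    (∃ i j : Fin (n - g), x = Sum.inr i ∧ y = Sum.inr j ∧ (j : ℕ) = (i : ℕ) + 1))

/-!
Attaching a pendant vertex at `u` raises the core index by one more than the number of connected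
subgraphs through `u`. A connected graph with a `g`-cycle is obtained from that cycle by attaching
pendant vertices and adding edges, and an added edge always creates new connected subgraphs. It is
therefore best to attach each pendant vertex where the fewest connected subgraphs pass, and to add
no edge. A connected graph on `n` vertices with a `g`-cycle has at least
`n - g + (g + 1).choose 2 + 1` connected subgraphs through each of its vertices. In the lollipop
graph this bound is attained at the tip, and up to symmetry nowhere else.
-/

/-! ### Counting connected subgraphs -/

section ConnectedSubgraphs

variable {V W : Type*} {G : SimpleGraph V} {G' : SimpleGraph W}

/-- The number of connected subgraphs of `G` whose vertex set contains `S`. The core index is the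
case `S = ∅`; the cases where `S` has one or two elements enter its recursion along pendant
vertices. -/
noncomputable def coreIndexThrough (G : SimpleGraph V) (S : Set V) : ℕ :=
  {H : G.Subgraph | H.Connected ∧ S ⊆ H.verts}.ncard

lemma coreIndexThrough_empty : coreIndexThrough G ∅ = coreIndex G := by
  simp only [coreIndexThrough, coreIndex, Set.empty_subset, and_true, ← Nat.card_coe_set_eq]
  rfl

lemma connected_subgraphMap (f : Copy G G') {H : G.Subgraph} :
    (H.map f.toHom).Connected ↔ H.Connected := by
  rw [Subgraph.connected_iff', Subgraph.connected_iff', (f.isoSubgraphMap H).connected_iff]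

lemma subgraphMap_injective (f : Copy G G') :
    Function.Injective (Subgraph.map f.toHom : G.Subgraph → G'.Subgraph) := by
  intro H K h
  have hf := f.injective
  ext u v
  · rw [← hf.mem_set_image, ← Subgraph.map_verts, h, Subgraph.map_verts, hf.mem_set_image]
  · rw [← Relation.map_apply_apply hf hf H.Adj, ← Subgraph.map_adj, h, Subgraph.map_adj,
      Relation.map_apply_apply hf hf]

lemma coreIndexThrough_le_of_copy [Finite W] (f : Copy G G') (S : Set V) :
    coreIndexThrough G S ≤ coreIndexThrough G' (f '' S) := by
  refine Set.ncard_le_ncard_of_injOn (Subgraph.map f.toHom) ?_ (subgraphMap_injective f).injOn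
  rintro H ⟨hH, hS⟩
  exact ⟨(connected_subgraphMap f).2 hH, Set.image_mono hS⟩

lemma coreIndex_le_of_copy [Finite W] (f : Copy G G') : coreIndex G ≤ coreIndex G' := by
  simpa [coreIndexThrough_empty] using coreIndexThrough_le_of_copy f ∅

lemma coreIndexThrough_image_of_iso [Finite V] [Finite W] (e : G ≃g G') (S : Set V) :
    coreIndexThrough G' (e '' S) = coreIndexThrough G S := by
  refine le_antisymm ?_ (coreIndexThrough_le_of_copy e.toCopy S)
  simpa [Set.image_image] using coreIndexThrough_le_of_copy e.symm.toCopy (e '' S)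

lemma coreIndex_eq_of_iso [Finite V] [Finite W] (e : G ≃g G') : coreIndex G = coreIndex G' :=
  (coreIndex_le_of_copy e.toCopy).antisymm (coreIndex_le_of_copy e.symm.toCopy)

lemma exists_subgraphMap_eq_of_coreIndex_le [Finite W] (f : Copy G G')
    (h : coreIndex G' ≤ coreIndex G) {K : G'.Subgraph} (hK : K.Connected) :
    ∃ H : G.Subgraph, H.map f.toHom = K := by
  let C : Set G.Subgraph := {H | H.Connected}
  let C' : Set G'.Subgraph := {H | H.Connected}
  have image_subset : Subgraph.map f.toHom '' C ⊆ C' := by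
    rintro _ ⟨H, hH, rfl⟩
    exact (connected_subgraphMap f).2 hH
  have ncard_le : C'.ncard ≤ (Subgraph.map f.toHom '' C).ncard := by
    rwa [Set.ncard_image_of_injective _ (subgraphMap_injective f)]
  have image_eq : Subgraph.map f.toHom '' C = C' :=
    Set.eq_of_subset_of_ncard_le image_subset ncard_le
  obtain ⟨H, -, hH⟩ := image_eq.ge hK
  exact ⟨H, hH⟩

lemma nonempty_iso_of_copy_of_coreIndex_le [Finite W] (f : Copy G G')
    (h : coreIndex G' ≤ coreIndex G) : Nonempty (G ≃g G') := by
  have surjective : Function.Surjective f.toHom := fun w ↦ by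
    obtain ⟨H, hH⟩ := exists_subgraphMap_eq_of_coreIndex_le f h
      (Subgraph.singletonSubgraph_connected (v := w))
    have hw : w ∈ (H.map f.toHom).verts := by simp [hH]
    obtain ⟨v, -, hv⟩ := hw
    exact ⟨v, hv⟩
  refine ⟨⟨.ofBijective f.toHom ⟨f.injective, surjective⟩,
    fun {u v} ↦ ⟨fun (huv : G'.Adj (f.toHom u) (f.toHom v)) ↦ ?_, f.toHom.map_adj⟩⟩⟩
  obtain ⟨H, hH⟩ :=
    exists_subgraphMap_eq_of_coreIndex_le f h (Subgraph.subgraphOfAdj_connected huv)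
  have hadj : (H.map f.toHom).Adj (f.toHom u) (f.toHom v) := hH ▸ subgraphOfAdj_adj_self huv
  exact H.adj_sub ((Relation.map_apply_apply f.injective f.injective _ _ _).1 hadj)

lemma two_le_coreIndexThrough [Finite V] (hG : G.Connected) (hcycle : ¬G.IsAcyclic) (S : Set V) :
    2 ≤ coreIndexThrough G S := by
  obtain ⟨T, hTG, hT⟩ := hG.exists_isTree_le
  have ne_top : toSubgraph T hTG ≠ ⊤ := fun h ↦ by
    have : T = G := by
      ext u v
      exact Iff.of_eq (congrArg (·.Adj u v) h)
    exact hcycle (this ▸ hT.isAcyclic)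
  rw [← Set.ncard_pair ne_top]
  refine Set.ncard_le_ncard ?_
  rintro _ (rfl | rfl)
  · exact ⟨hT.connected.toSubgraph hTG, by simp⟩
  · exact ⟨Subgraph.connected_iff'.2 (Subgraph.topIso.connected_iff.2 hG), by simp⟩

end ConnectedSubgraphs

lemma subgraph_connected_iff_forall_closed {V : Type*} {G : SimpleGraph V} {H : G.Subgraph} {r : V}
    (hr : r ∈ H.verts) :
    H.Connected ↔ ∀ S : Set V, r ∈ S → (∀ x y, H.Adj x y → x ∈ S → y ∈ S) → H.verts ⊆ S := by
  constructor
  · intro hH S hrS hS y hy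
    obtain ⟨p⟩ := hH.coe.preconnected ⟨r, hr⟩ ⟨y, hy⟩
    by_contra hyS
    obtain ⟨d, -, hd, hd'⟩ := p.exists_boundary_dart (Subtype.val ⁻¹' S) hrS hyS
    exact hd' (hS _ _ d.adj hd)
  · intro h
    rw [Subgraph.connected_iff', connected_iff_exists_forall_reachable]
    have reachable := h {y | ∃ hy : y ∈ H.verts, H.coe.Reachable ⟨r, hr⟩ ⟨y, hy⟩} ⟨hr, .rfl⟩
      fun x y hxy ⟨_, hx⟩ ↦ ⟨H.edge_vert hxy.symm, hx.trans (Subgraph.Adj.coe hxy).reachable⟩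
    exact ⟨⟨r, hr⟩, fun y ↦ (reachable y.2).2⟩

/-! ### Pendant vertices -/

section PendantVertex

variable {V W : Type*}

/-- The graph obtained from `G` by attaching a pendant vertex, called `none`, to the vertex `u`. -/
def addLeaf (G : SimpleGraph V) (u : V) : SimpleGraph (Option V) where
  Adj
    | some x, some y => G.Adj x y
    | some x, none => x = u
    | none, some y => y = u
    | none, none => False
  symm.symm
    | some _, some _, h => G.adj_symm h
    | some _, none, h => h
    | none, some _, h => h
  loopless.irrefl
    | some _, h => G.irrefl h

variable {G : SimpleGraph V} {G' : SimpleGraph W} {u : V}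

@[simp] lemma addLeaf_adj_none_some {y : V} : (addLeaf G u).Adj none (some y) ↔ y = u := Iff.rfl

@[simp] lemma addLeaf_adj_some_none {x : V} : (addLeaf G u).Adj (some x) none ↔ x = u := Iff.rfl

/-- The inclusion of `G` into `addLeaf G u`. -/
def addLeafInclusion (G : SimpleGraph V) (u : V) : Copy G (addLeaf G u) :=
  ⟨⟨some, id⟩, Option.some_injective V⟩

@[simp] lemma coe_addLeafInclusion : ⇑(addLeafInclusion G u) = some := rfl

lemma connected_addLeaf (hG : G.Connected) : (addLeaf G u).Connected := by
  rw [connected_iff_exists_forall_reachable]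
  refine ⟨some u, ?_⟩
  rintro (_ | x)
  · exact Adj.reachable (addLeaf_adj_some_none.2 rfl)
  · exact (hG.preconnected u x).map (addLeafInclusion G u).toHom

lemma connected_comap_addLeafInclusion {K : (addLeaf G u).Subgraph} (hK : K.Connected) {x : V}
    (hx : some x ∈ K.verts) : (K.comap (addLeafInclusion G u).toHom).Connected := by
  refine (subgraph_connected_iff_forall_closed (r := x) hx).2 fun S hxS hS ↦ ?_
  -- Folding the leaf back onto `u` turns a closed set of the comap into a closed set of `K`.
  have closed : ∀ p q, K.Adj p q → p.getD u ∈ S → q.getD u ∈ S := by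
    rintro (_ | p) (_ | q) hpq hp
    · exact hp
    · exact addLeaf_adj_none_some.1 hpq.adj_sub ▸ hp
    · exact addLeaf_adj_some_none.1 hpq.adj_sub ▸ hp
    · exact hS p q ⟨hpq.adj_sub, hpq⟩ hp
  have subset := (subgraph_connected_iff_forall_closed hx).1 hK {p | p.getD u ∈ S} hxS closed
  exact fun y hy ↦ subset hy

lemma leaf_adj_of_connected {K : (addLeaf G u).Subgraph} (hK : K.Connected)
    (hnone : none ∈ K.verts) {x : V} (hx : some x ∈ K.verts) : K.Adj none (some u) := by
  by_contra hadj
  have subset : K.verts ⊆ {none} := by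
    refine (subgraph_connected_iff_forall_closed hnone).1 hK _ rfl ?_
    rintro _ (_ | y) hxy rfl
    · rfl
    · exact absurd (addLeaf_adj_none_some.1 hxy.adj_sub ▸ hxy) hadj
  exact Option.some_ne_none x (subset hx)

/-- The subgraph of `addLeaf G u` obtained from a subgraph `H` of `G` by adding the pendant edge. -/
def withLeaf (u : V) (H : G.Subgraph) : (addLeaf G u).Subgraph :=
  H.map (addLeafInclusion G u).toHom ⊔
    (addLeaf G u).subgraphOfAdj (addLeaf_adj_none_some.2 (rfl : u = u))

lemma none_mem_withLeaf_verts {H : G.Subgraph} : none ∈ (withLeaf u H).verts := by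
  simp [withLeaf]

lemma some_mem_withLeaf_verts {H : G.Subgraph} {x : V} :
    some x ∈ (withLeaf u H).verts ↔ x ∈ H.verts ∨ x = u := by
  simp [withLeaf, or_comm]

lemma connected_withLeaf {H : G.Subgraph} (hH : H.Connected) (hu : u ∈ H.verts) :
    (withLeaf u H).Connected :=
  Subgraph.connected_sup ((connected_subgraphMap _).2 hH).preconnected
    (Subgraph.subgraphOfAdj_connected _).preconnected ⟨some u, by simpa using hu⟩

lemma comap_withLeaf {H : G.Subgraph} (hu : u ∈ H.verts) :
    (withLeaf u H).comap (addLeafInclusion G u).toHom = H := by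
  ext x y
  · rw [Subgraph.comap_verts, Set.mem_preimage, Copy.coe_toHom, coe_addLeafInclusion,
      some_mem_withLeaf_verts, or_iff_left_of_imp fun hx ↦ hx ▸ hu]
  · simpa [withLeaf, Relation.Map] using fun h : H.Adj x y ↦ h.adj_sub

lemma withLeaf_comap {K : (addLeaf G u).Subgraph} (hK : K.Adj none (some u)) :
    withLeaf u (K.comap (addLeafInclusion G u).toHom) = K := by
  refine le_antisymm (sup_le ((Subgraph.map_le_iff_le_comap _ _ _).2 le_rfl)
    (subgraphOfAdj_le_of_adj K hK)) ⟨?_, ?_⟩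
  · rintro (_ | x) hx
    · exact none_mem_withLeaf_verts
    · exact some_mem_withLeaf_verts.2 (.inl hx)
  · rintro (_ | x) (_ | y) hxy
    · exact absurd hxy.adj_sub (SimpleGraph.irrefl _)
    · simp [withLeaf, addLeaf_adj_none_some.1 hxy.adj_sub]
    · simp [withLeaf, addLeaf_adj_some_none.1 hxy.adj_sub]
    · exact .inl ⟨x, y, ⟨hxy.adj_sub, hxy⟩, rfl, rfl⟩

lemma subgraphMap_comap_addLeafInclusion {K : (addLeaf G u).Subgraph} (hK : none ∉ K.verts) :
    (K.comap (addLeafInclusion G u).toHom).map (addLeafInclusion G u).toHom = K := by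
  refine le_antisymm ((Subgraph.map_le_iff_le_comap _ _ _).2 le_rfl) ⟨?_, ?_⟩
  · rintro (_ | x) hx
    · exact absurd hx hK
    · exact ⟨x, hx, rfl⟩
  · rintro (_ | x) (_ | y) hxy
    · exact absurd hxy.fst_mem hK
    · exact absurd hxy.fst_mem hK
    · exact absurd hxy.snd_mem hK
    · exact ⟨x, y, ⟨hxy.adj_sub, hxy⟩, rfl, rfl⟩

lemma coreIndexThrough_addLeaf_insert_none {S : Set V} (hS : S.Nonempty) :
    coreIndexThrough (addLeaf G u) (insert none (some '' S)) = coreIndexThrough G (insert u S) := by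
  have injOn : Set.InjOn (withLeaf u) {H : G.Subgraph | H.Connected ∧ insert u S ⊆ H.verts} :=
    fun H hH K hK h ↦ by
      rw [← comap_withLeaf (hH.2 (Set.mem_insert u S)), h,
        comap_withLeaf (hK.2 (Set.mem_insert u S))]
  rw [coreIndexThrough, coreIndexThrough, ← injOn.ncard_image]
  congr 1
  ext K
  constructor
  · rintro ⟨hK, hSK⟩
    rw [Set.insert_subset_iff, Set.image_subset_iff] at hSK
    obtain ⟨x, hx⟩ := hS
    have hadj := leaf_adj_of_connected hK hSK.1 (hSK.2 hx)
    exact ⟨_, ⟨connected_comap_addLeafInclusion hK (hSK.2 hx),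
      Set.insert_subset hadj.snd_mem hSK.2⟩, withLeaf_comap hadj⟩
  · rintro ⟨H, ⟨hH, hSH⟩, rfl⟩
    rw [Set.insert_subset_iff] at hSH
    refine ⟨connected_withLeaf hH hSH.1, Set.insert_subset none_mem_withLeaf_verts ?_⟩
    exact Set.image_subset_iff.2 fun x hx ↦ some_mem_withLeaf_verts.2 (.inl (hSH.2 hx))

lemma coreIndexThrough_addLeaf_none [Finite V] :
    coreIndexThrough (addLeaf G u) {none} = coreIndexThrough G {u} + 1 := by
  have through_both := coreIndexThrough_addLeaf_insert_none (G := G) (u := u)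
    (Set.singleton_nonempty u)
  rw [Set.image_singleton, Set.pair_eq_singleton] at through_both
  rw [← through_both, coreIndexThrough, coreIndexThrough,
    ← Set.ncard_insert_of_notMem (a := (addLeaf G u).singletonSubgraph none)
      (by simp [Set.insert_subset_iff])]
  congr 1
  ext K
  constructor
  · rintro ⟨hK, hnone⟩
    rw [Set.singleton_subset_iff] at hnone
    by_cases hadj : K.Adj none (some u)
    · exact .inr ⟨hK, Set.insert_subset hnone (Set.singleton_subset_iff.2 hadj.snd_mem)⟩
    · refine .inl ?_
      have some_notMem (x : V) : some x ∉ K.verts := fun hx ↦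
        hadj (leaf_adj_of_connected hK hnone hx)
      ext (_ | x) (_ | y)
      · simp [hnone]
      · simp [some_notMem]
      · simpa using fun h : K.Adj none none ↦ SimpleGraph.irrefl _ h.adj_sub
      · simpa using fun h : K.Adj _ _ ↦ some_notMem y h.snd_mem
      · simpa using fun h : K.Adj _ _ ↦ some_notMem x h.fst_mem
      · simpa using fun h : K.Adj _ _ ↦ some_notMem x h.fst_mem
  · rintro (rfl | ⟨hK, hS⟩)
    · exact ⟨Subgraph.singletonSubgraph_connected, by simp⟩
    · exact ⟨hK, (Set.singleton_subset_iff.2 (Set.mem_insert _ _)).trans hS⟩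

lemma coreIndexThrough_addLeaf_image [Finite V] (S : Set V) :
    coreIndexThrough (addLeaf G u) (some '' S) =
      coreIndexThrough G S + coreIndexThrough (addLeaf G u) (insert none (some '' S)) := by
  have avoiding : {K : (addLeaf G u).Subgraph | K.Connected ∧ some '' S ⊆ K.verts} \
      {K | none ∈ K.verts} = Subgraph.map (addLeafInclusion G u).toHom ''
        {H | H.Connected ∧ S ⊆ H.verts} := by
    ext K
    constructor
    · rintro ⟨⟨hK, hS⟩, hnone⟩
      have hmap := subgraphMap_comap_addLeafInclusion hnone
      refine ⟨_, ⟨?_, Set.image_subset_iff (f := some).1 hS⟩, hmap⟩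
      rwa [← connected_subgraphMap, hmap]
    · rintro ⟨H, ⟨hH, hS⟩, rfl⟩
      exact ⟨⟨(connected_subgraphMap _).2 hH, Set.image_mono hS⟩, by simp⟩
  have through : {K : (addLeaf G u).Subgraph | K.Connected ∧ some '' S ⊆ K.verts} ∩
      {K | none ∈ K.verts} = {K | K.Connected ∧ insert none (some '' S) ⊆ K.verts} := by
    ext K
    simp only [Set.insert_subset_iff, Set.mem_inter_iff, Set.mem_ofPred_eq]
    tauto
  rw [coreIndexThrough, ← Set.ncard_inter_add_ncard_sdiff_eq_ncard _ {K | none ∈ K.verts}, avoiding,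
    through, add_comm, Set.ncard_image_of_injective _ (subgraphMap_injective _)]
  rfl

lemma coreIndexThrough_addLeaf_some [Finite V] (x : V) :
    coreIndexThrough (addLeaf G u) {some x} =
      coreIndexThrough G {x} + coreIndexThrough G {u, x} := by
  rw [← coreIndexThrough_addLeaf_insert_none (Set.singleton_nonempty x),
    ← coreIndexThrough_addLeaf_image, Set.image_singleton]

lemma coreIndex_addLeaf [Finite V] :
    coreIndex (addLeaf G u) = coreIndex G + coreIndexThrough G {u} + 1 := by
  have h := coreIndexThrough_addLeaf_image (G := G) (u := u) ∅
  rwa [Set.image_empty, insert_empty_eq, coreIndexThrough_empty, coreIndexThrough_empty,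
    coreIndexThrough_addLeaf_none, ← add_assoc] at h

/-- A copy of `G` and a further vertex `v` adjacent to the image of `u` give a copy of
`addLeaf G u`. -/
def addLeafCopy (f : Copy G G') {v : W} (hv : v ∉ Set.range f) (hadj : G'.Adj (f u) v) :
    Copy (addLeaf G u) G' where
  toHom :=
    { toFun := fun p ↦ p.elim v f
      map_rel' := by
        rintro (_ | x) (_ | y) hxy
        · exact absurd hxy (SimpleGraph.irrefl _)
        · exact addLeaf_adj_none_some.1 hxy ▸ hadj.symm
        · exact addLeaf_adj_some_none.1 hxy ▸ hadj
        · exact f.toHom.map_adj hxy }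
  injective' := by
    rintro (_ | x) (_ | y) hxy
    · rfl
    · exact absurd ⟨y, hxy.symm⟩ hv
    · exact absurd ⟨x, hxy⟩ hv
    · exact congrArg some (f.injective hxy)

/-- An isomorphism extends to the graphs obtained by attaching pendant vertices at corresponding
vertices. -/
def addLeafCongr (e : G ≃g G') (u : V) : addLeaf G u ≃g addLeaf G' (e u) where
  toEquiv := e.toEquiv.optionCongr
  map_rel_iff' := by
    rintro (_ | x) (_ | y)
    · exact iff_of_false (SimpleGraph.irrefl _) (SimpleGraph.irrefl _)
    · exact e.injective.eq_iff
    · exact e.injective.eq_iff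
    · exact e.map_adj_iff

end PendantVertex

/-! ### Stripping a vertex from a connected graph -/

universe u

section Decomposition

variable {V W : Type*} {G : SimpleGraph V} {A : SimpleGraph W}

lemma exists_notMem_connected_induce_compl [Finite V] (hG : G.Connected) {S : Set V}
    (hS : (G.induce S).Connected) (hne : S ≠ Set.univ) :
    ∃ v ∉ S, (G.induce {v}ᶜ).Connected := by
  obtain ⟨T, hST, hT⟩ := (Set.toFinite {T : Set V | (G.induce T).Connected ∧ T ≠ Set.univ})
    |>.exists_le_maximal ⟨hS, hne⟩
  obtain ⟨x, hx⟩ := Set.nonempty_coe_sort.1 hT.prop.1.nonempty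
  obtain ⟨y, hy⟩ := (Set.ne_univ_iff_exists_notMem T).1 hT.prop.2
  obtain ⟨p⟩ := hG.preconnected x y
  obtain ⟨⟨⟨a, b⟩, hab⟩, -, ha : a ∈ T, hb : b ∉ T⟩ := p.exists_boundary_dart T hx hy
  have union_connected : (G.induce (T ∪ {b})).Connected :=
    connected_induce_union hT.prop.1.preconnected (.of_subsingleton) ha rfl hab
  have union_eq_univ : T ∪ {b} = Set.univ := by
    by_contra h
    exact hb (hT.le_of_ge ⟨union_connected, h⟩ Set.subset_union_left (.inr rfl))
  have eq_compl : T = {b}ᶜ :=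
    (IsCompl.of_eq (Set.inter_singleton_eq_empty.2 hb) union_eq_univ).eq_compl
  exact ⟨b, fun h ↦ hb (hST h), eq_compl ▸ hT.prop.1⟩

lemma card_compl_singleton_add_one [Finite V] (v : V) :
    Nat.card ({v}ᶜ : Set V) + 1 = Nat.card V := by
  rw [Nat.card_coe_set_eq, add_comm, ← Set.ncard_add_ncard_compl {v}, Set.ncard_singleton]

lemma exists_addLeaf_induce_compl_isContained [Finite V] (hG : G.Connected) (hA : A.Connected)
    (hAG : A ⊑ G) (hcard : Nat.card W < Nat.card V) :
    ∃ (v : V) (u : ({v}ᶜ : Set V)), (G.induce {v}ᶜ).Connected ∧ A ⊑ G.induce {v}ᶜ ∧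
      addLeaf (G.induce {v}ᶜ) u ⊑ G := by
  obtain ⟨f⟩ := hAG
  have : Finite W := .of_injective f f.injective
  have range_connected : (G.induce (Set.range f)).Connected :=
    hA.map ⟨Set.rangeFactorization f, f.toHom.map_adj⟩ Set.rangeFactorization_surjective
  have range_ne_univ : Set.range f ≠ Set.univ := fun h ↦ hcard.ne <| by
    rw [← Set.ncard_range_of_injective f.injective, ← Set.eq_univ_iff_ncard]
    exact h
  obtain ⟨v, hv, hconn⟩ := exists_notMem_connected_induce_compl hG range_connected range_ne_univ
  have := hA.nonempty
  have : Nontrivial V := Finite.one_lt_card_iff_nontrivial.1 (lt_of_le_of_lt Finite.card_pos hcard)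
  obtain ⟨u, hvu⟩ := hG.preconnected.exists_adj_of_nontrivial v
  refine ⟨v, ⟨u, hvu.ne'⟩, hconn, ⟨⟨⟨fun w ↦ ⟨f w, fun h ↦ hv ⟨w, h⟩⟩, f.toHom.map_adj⟩, ?_⟩⟩,
    ⟨addLeafCopy (Copy.induce G {v}ᶜ) ?_ hvu.symm⟩⟩
  · exact fun x y h ↦ f.injective (congrArg Subtype.val h)
  · rintro ⟨⟨w, hw⟩, h⟩
    exact hw h

theorem induction_on_addLeaf (hA : A.Connected)
    {motive : ∀ (V : Type u) [Finite V], SimpleGraph V → Prop}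
    (base : ∀ {V : Type u} [Finite V] {G : SimpleGraph V} (f : Copy A G), Function.Bijective f →
      motive V G)
    (step : ∀ {V V' : Type u} [Finite V] [Finite V'] {G : SimpleGraph V} {G' : SimpleGraph V'}
      {u : V'} (f : Copy (addLeaf G' u) G), Function.Bijective f → G'.Connected → A ⊑ G' →
      motive V' G' → motive V G)
    {V : Type u} [Finite V] {G : SimpleGraph V} (hG : G.Connected) (hAG : A ⊑ G) : motive V G := by
  induction hn : Nat.card V generalizing V with
  | zero =>
    have := hG.nonempty
    exact absurd hn Nat.card_pos.ne'
  | succ n ih =>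
    obtain hcard | hcard := le_or_gt (Nat.card V) (Nat.card W)
    · obtain ⟨f⟩ := hAG
      exact base f (f.injective.bijective_of_nat_card_le hcard)
    · obtain ⟨v, u, hconn, hA', ⟨f⟩⟩ := exists_addLeaf_induce_compl_isContained hG hA hAG hcard
      have card_compl := card_compl_singleton_add_one v
      have bijective : Function.Bijective f :=
        f.injective.bijective_of_nat_card_le (by rw [Finite.card_option, card_compl])
      exact step f bijective hconn hA' (ih hconn hA' (by lia))

end Decomposition

/-! ### The structure of lollipop graphs -/

section Lollipop

variable {g n : ℕ}

lemma lollipop_adj_inl_inl {a b : Fin g} :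
    (lollipop n g).Adj (.inl a) (.inl b) ↔ (cycleGraph g).Adj a b := by
  simp only [lollipop, fromRel_adj, Sum.inl.injEq, reduceCtorEq, false_and, and_false,
    exists_false, or_false, exists_and_left, exists_eq_left', adj_comm _ b a, or_self]
  exact and_iff_right_of_imp fun h hab ↦ h.ne (Sum.inl_injective hab)

lemma lollipop_adj_inl_inr {a : Fin g} {i : Fin (n - g)} :
    (lollipop n g).Adj (.inl a) (.inr i) ↔ (a : ℕ) = 0 ∧ (i : ℕ) = 0 := by
  simp [lollipop]

lemma lollipop_adj_inr_inl {a : Fin g} {i : Fin (n - g)} :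
    (lollipop n g).Adj (.inr i) (.inl a) ↔ (a : ℕ) = 0 ∧ (i : ℕ) = 0 := by
  rw [adj_comm, lollipop_adj_inl_inr]

lemma lollipop_adj_inr_inr {i j : Fin (n - g)} :
    (lollipop n g).Adj (.inr i) (.inr j) ↔ (j : ℕ) = i + 1 ∨ (i : ℕ) = j + 1 := by
  simp only [lollipop, fromRel_adj, ne_eq, Sum.inr.injEq, reduceCtorEq, false_and, exists_false,
    and_false, false_or, exists_and_left, Fin.ext_iff]
  lia

lemma le_card_of_cycleGraph_isContained {V : Type*} [Finite V] {G : SimpleGraph V}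
    (hcycle : cycleGraph g ⊑ G) : g ≤ Nat.card V := by
  obtain ⟨f⟩ := hcycle
  simpa using Nat.card_le_card_of_injective f f.injective

/-- The inclusion of the cycle into a lollipop graph. -/
def cycleGraphToLollipop (n g : ℕ) : Copy (cycleGraph g) (lollipop n g) :=
  ⟨⟨.inl, lollipop_adj_inl_inl.2⟩, Sum.inl_injective⟩

lemma exists_iso_cycleGraph_lollipop_self (g : ℕ) : Nonempty (cycleGraph g ≃g lollipop g g) := by
  have : IsEmpty (Fin (g - g)) := by
    rw [Nat.sub_self]
    exact Fin.isEmpty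
  exact ⟨⟨(Equiv.sumEmpty (Fin g) (Fin (g - g))).symm, lollipop_adj_inl_inl⟩⟩

variable [NeZero g]

/-- The end of the path of a lollipop graph, which is the vertex `0` of the cycle if that path is
empty. -/
def lollipopTip (n g : ℕ) [NeZero g] : Fin g ⊕ Fin (n - g) :=
  if h : n - g = 0 then .inl 0 else .inr ⟨n - g - 1, Nat.sub_one_lt h⟩

lemma eq_lollipopTip_iff_inl {a : Fin g} :
    .inl a = lollipopTip n g ↔ (a : ℕ) = 0 ∧ n - g = 0 := by
  unfold lollipopTip
  split_ifs with h <;> simp [h]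

lemma eq_lollipopTip_iff_inr {i : Fin (n - g)} :
    .inr i = lollipopTip n g ↔ (i : ℕ) + 1 = n - g := by
  unfold lollipopTip
  have := i.isLt
  split_ifs with h <;> simp [Fin.ext_iff] <;> lia

/-- The vertices of `lollipop n g` as the vertices of `lollipop (n + 1) g` other than its tip. -/
def lollipopSuccEmbedding (n g : ℕ) : lollipop n g ↪g lollipop (n + 1) g where
  toFun := Sum.map id (Fin.castLE (Nat.sub_le_sub_right n.le_succ g))
  inj' := Function.injective_id.sumMap (Fin.castLE_injective _)
  map_rel_iff' := by
    rintro (a | i) (b | j) <;>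
      simp [lollipop_adj_inl_inl, lollipop_adj_inl_inr, lollipop_adj_inr_inl, lollipop_adj_inr_inr]

lemma lollipopTip_succ_notMem_range (hgn : g ≤ n) :
    lollipopTip (n + 1) g ∉ Set.range (lollipopSuccEmbedding n g) := by
  rintro ⟨a | i, h⟩
  · have := (eq_lollipopTip_iff_inl.1 h).2
    lia
  · have : (i : ℕ) + 1 = n + 1 - g := eq_lollipopTip_iff_inr.1 h
    lia

lemma lollipop_adj_lollipopTip_succ (hgn : g ≤ n) {x : Fin g ⊕ Fin (n - g)} :
    (lollipop (n + 1) g).Adj (lollipopSuccEmbedding n g x) (lollipopTip (n + 1) g) ↔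
      x = lollipopTip n g := by
  have tip_eq : lollipopTip (n + 1) g = .inr ⟨n - g, by lia⟩ :=
    (eq_lollipopTip_iff_inr.2 (Nat.sub_add_comm hgn).symm).symm
  rw [tip_eq]
  obtain a | i := x
  · rw [eq_lollipopTip_iff_inl]
    exact lollipop_adj_inl_inr
  · rw [eq_lollipopTip_iff_inr]
    refine lollipop_adj_inr_inr.trans ?_
    simp only [Fin.val_castLE]
    lia

lemma exists_iso_addLeaf_lollipopTip (hgn : g ≤ n) :
    ∃ e : addLeaf (lollipop n g) (lollipopTip n g) ≃g lollipop (n + 1) g,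
      e none = lollipopTip (n + 1) g := by
  let f : Copy (addLeaf (lollipop n g) (lollipopTip n g)) (lollipop (n + 1) g) :=
    addLeafCopy (lollipopSuccEmbedding n g).toCopy (lollipopTip_succ_notMem_range hgn)
      ((lollipop_adj_lollipopTip_succ hgn).2 rfl)
  have card_eq : Nat.card (Option (Fin g ⊕ Fin (n - g))) =
      Nat.card (Fin g ⊕ Fin (n + 1 - g)) := by
    simp only [Finite.card_option, Nat.card_sum, Nat.card_fin]
    lia
  have adj_iff : ∀ {p q}, (lollipop (n + 1) g).Adj (f p) (f q) ↔
      (addLeaf (lollipop n g) (lollipopTip n g)).Adj p q := by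
    rintro (_ | x) (_ | y)
    · exact iff_of_false (SimpleGraph.irrefl _) (SimpleGraph.irrefl _)
    · exact (adj_comm _ _ _).trans (lollipop_adj_lollipopTip_succ hgn)
    · exact lollipop_adj_lollipopTip_succ hgn
    · exact (lollipopSuccEmbedding n g).map_adj_iff
  exact ⟨⟨.ofBijective f ((Nat.bijective_iff_injective_and_card f).2 ⟨f.injective, card_eq⟩),
    adj_iff⟩, rfl⟩

lemma connected_cycleGraph (g : ℕ) [NeZero g] : (cycleGraph g).Connected := by
  obtain ⟨m, rfl⟩ := Nat.exists_eq_add_one_of_ne_zero (NeZero.ne g)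
  exact cycleGraph_connected

lemma connected_lollipop (hgn : g ≤ n) : (lollipop n g).Connected := by
  induction n, hgn using Nat.le_induction with
  | base =>
    obtain ⟨e⟩ := exists_iso_cycleGraph_lollipop_self g
    exact e.connected_iff.1 (connected_cycleGraph g)
  | succ n hgn ih =>
    obtain ⟨e, -⟩ := exists_iso_addLeaf_lollipopTip hgn
    exact e.connected_iff.1 (connected_addLeaf ih)

end Lollipop

/-! ### Connected subgraphs of a cycle -/

section CycleAndLollipop

/-- The cycle of length `g` on the vertex set `ZMod g`, in which `x` and `x + 1` are adjacent. -/
def zmodCycle (g : ℕ) : SimpleGraph (ZMod g) := circulantGraph {1}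

lemma exists_iso_zmodCycle_cycleGraph (g : ℕ) [NeZero g] :
    Nonempty (zmodCycle g ≃g cycleGraph g) := by
  obtain ⟨n, rfl⟩ := Nat.exists_eq_add_one_of_ne_zero (NeZero.ne g)
  exact ⟨⟨Equiv.refl _, by rw [cycleGraph_eq_circulantGraph]; rfl⟩⟩

/-- The rotation of the cycle by `d`. -/
def zmodCycleRotation {g : ℕ} (d : ZMod g) : zmodCycle g ≃g zmodCycle g where
  toEquiv := Equiv.addRight d
  map_rel_iff' := circulantGraph_adj_translate

local instance (g : ℕ) [Fact (2 < g)] : Fact (1 < g) := ⟨one_lt_two.trans Fact.out⟩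

local instance (g : ℕ) [Fact (1 < g)] : NeZero g := ⟨(zero_lt_one.trans Fact.out).ne'⟩

section

variable {g : ℕ} [Fact (1 < g)]

lemma val_sub_one_sub_add_one {x s : ZMod g} (hxs : x ≠ s) :
    (x - 1 - s).val + 1 = (x - s).val := by
  have pos : 1 ≤ (x - s).val := Nat.one_le_iff_ne_zero.2 <|
    (ZMod.val_ne_zero _).2 (sub_ne_zero.2 hxs)
  rw [sub_right_comm, ZMod.val_sub (by rwa [ZMod.val_one]), ZMod.val_one, Nat.sub_add_cancel pos]

lemma val_add_one_sub {x s : ZMod g} (hx : x + 1 ≠ s) : (x + 1 - s).val = (x - s).val + 1 := by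
  rw [← val_sub_one_sub_add_one hx, add_sub_cancel_right]

lemma add_one_ne_of_val_sub_lt {x s t : ZMod g} (hx : (x - s).val < (t - s).val) : x + 1 ≠ s := by
  rintro rfl
  have : (x - (x + 1)).val = g - 1 := by
    obtain ⟨n, rfl⟩ := Nat.exists_eq_add_one_of_ne_zero (NeZero.ne g)
    rw [sub_add_cancel_left, ZMod.val_neg_one, Nat.add_sub_cancel]
  have := ZMod.val_lt (t - (x + 1))
  lia

lemma zmodCycle_adj {x y : ZMod g} : (zmodCycle g).Adj x y ↔ y = x + 1 ∨ x = y + 1 := by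
  simp only [zmodCycle, circulantGraph_adj, Set.mem_singleton_iff, sub_eq_iff_eq_add']
  constructor
  · tauto
  · rintro (rfl | rfl) <;> simp

lemma zmodCycle_adj_add_one (x : ZMod g) : (zmodCycle g).Adj x (x + 1) := zmodCycle_adj.2 (.inl rfl)

lemma subgraph_zmodCycle_le_of_adj_add_one {H K : (zmodCycle g).Subgraph}
    (hverts : H.verts ⊆ K.verts) (hadj : ∀ x, H.Adj x (x + 1) → K.Adj x (x + 1)) : H ≤ K := by
  refine ⟨hverts, fun x y hxy ↦ ?_⟩
  obtain rfl | rfl := zmodCycle_adj.1 hxy.adj_sub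
  · exact hadj x hxy
  · exact (hadj y hxy.symm).symm

/-- The subgraph of the cycle formed by the path `s, s + 1, …, t`. When `t + 1 = s` it contains all
vertices, but not the edge between `t` and `s`. -/
def cycleArc (s t : ZMod g) : (zmodCycle g).Subgraph where
  verts := {x | (x - s).val ≤ (t - s).val}
  Adj x y := (y = x + 1 ∧ (x - s).val < (t - s).val) ∨ (x = y + 1 ∧ (y - s).val < (t - s).val)
  adj_sub h := zmodCycle_adj.2 (h.imp And.left And.left)
  edge_vert := by
    rintro x y (⟨rfl, hx⟩ | ⟨rfl, hy⟩)
    · exact hx.le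
    · exact (val_add_one_sub (add_one_ne_of_val_sub_lt hy)).le.trans hy
  symm := ⟨fun _ _ ↦ Or.symm⟩

lemma mem_cycleArc_verts {s t x : ZMod g} :
    x ∈ (cycleArc s t).verts ↔ (x - s).val ≤ (t - s).val := Iff.rfl

lemma start_mem_cycleArc_verts (s t : ZMod g) : s ∈ (cycleArc s t).verts := by
  simp [mem_cycleArc_verts]

lemma end_mem_cycleArc_verts (s t : ZMod g) : t ∈ (cycleArc s t).verts := le_refl (t - s).val

lemma connected_top_zmodCycle : (⊤ : (zmodCycle g).Subgraph).Connected := by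
  refine (subgraph_connected_iff_forall_closed (Set.mem_univ 0)).2 fun S h0 hS x _ ↦ ?_
  rw [← ZMod.natCast_zmod_val x]
  induction x.val with
  | zero => simpa using h0
  | succ n ih =>
    rw [Nat.cast_add_one]
    exact hS _ _ (zmodCycle_adj_add_one _) ih

lemma exists_mem_verts_not_sub_one_adj {H : (zmodCycle g).Subgraph} (hH : H.verts.Nonempty)
    (htop : H ≠ ⊤) : ∃ s ∈ H.verts, ¬H.Adj (s - 1) s := by
  by_contra! hadj
  obtain ⟨r, hr⟩ := hH
  have mem_verts (x : ZMod g) : x ∈ H.verts := by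
    rw [← sub_sub_cancel r x, ← ZMod.natCast_zmod_val (r - x)]
    induction (r - x).val with
    | zero => simpa using hr
    | succ n ih =>
      rw [Nat.cast_add_one, ← sub_sub]
      exact (hadj _ ih).fst_mem
  refine htop (top_le_iff.1 (subgraph_zmodCycle_le_of_adj_add_one (fun x _ ↦ mem_verts x) ?_))
  intro x _
  simpa using hadj (x + 1) (mem_verts _)

end

variable {g : ℕ} [Fact (2 < g)]

lemma cycleArc_adj_add_one {s t x : ZMod g} :
    (cycleArc s t).Adj x (x + 1) ↔ (x - s).val < (t - s).val := by
  have two_ne_zero : (2 : ZMod g) ≠ 0 := by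
    rw [← Nat.cast_ofNat, Ne, ZMod.natCast_eq_zero_iff]
    exact Nat.not_dvd_of_pos_of_lt two_pos Fact.out
  refine ⟨fun h ↦ h.elim And.right fun h ↦ absurd h.1 ?_, fun h ↦ .inl ⟨rfl, h⟩⟩
  rwa [add_assoc, left_eq_add, one_add_one_eq_two]

lemma cycleArc_sub_one_adj {s t x : ZMod g} :
    (cycleArc s t).Adj (x - 1) x ↔ (x - 1 - s).val < (t - s).val := by
  simpa using cycleArc_adj_add_one (s := s) (t := t) (x := x - 1)

lemma cycleArc_adj_add_one_iff_ne {s t x : ZMod g} (hx : x ∈ (cycleArc s t).verts) :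
    (cycleArc s t).Adj x (x + 1) ↔ x ≠ t := by
  rw [cycleArc_adj_add_one, (mem_cycleArc_verts.1 hx).lt_iff_ne, (ZMod.val_injective g).ne_iff,
    sub_left_injective.ne_iff]

lemma cycleArc_sub_one_adj_iff_ne {s t x : ZMod g} (hx : x ∈ (cycleArc s t).verts) :
    (cycleArc s t).Adj (x - 1) x ↔ x ≠ s := by
  rw [cycleArc_sub_one_adj]
  constructor
  · rintro h rfl
    exact add_one_ne_of_val_sub_lt h (sub_add_cancel _ _)
  · intro hxs
    rwa [← Nat.succ_le_iff, Nat.succ_eq_add_one, val_sub_one_sub_add_one hxs]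

lemma connected_cycleArc (s t : ZMod g) : (cycleArc s t).Connected := by
  refine (subgraph_connected_iff_forall_closed (start_mem_cycleArc_verts s t)).2
    fun S hsS hS x hx ↦ ?_
  induction hn : (x - s).val generalizing x with
  | zero => rwa [sub_eq_zero.1 ((ZMod.val_eq_zero _).1 hn)]
  | succ n ih =>
    have hxs : x ≠ s := by
      rintro rfl
      simp at hn
    have hadj := (cycleArc_sub_one_adj_iff_ne hx).2 hxs
    exact hS _ _ hadj (ih _ hadj.fst_mem (by have := val_sub_one_sub_add_one hxs; lia))

lemma cycleArc_injective {s t s' t' : ZMod g} (h : cycleArc s t = cycleArc s' t') :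
    s = s' ∧ t = t' := by
  have hs : s ∈ (cycleArc s' t').verts := h ▸ start_mem_cycleArc_verts s t
  have ht : t ∈ (cycleArc s' t').verts := h ▸ end_mem_cycleArc_verts s t
  rw [← not_ne_iff, ← not_ne_iff (b := t'), ← cycleArc_sub_one_adj_iff_ne hs,
    ← cycleArc_adj_add_one_iff_ne ht, ← h,
    cycleArc_sub_one_adj_iff_ne (start_mem_cycleArc_verts s t),
    cycleArc_adj_add_one_iff_ne (end_mem_cycleArc_verts s t)]
  simp

lemma cycleArc_ne_top (s t : ZMod g) : cycleArc s t ≠ ⊤ := by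
  intro h
  refine (cycleArc_adj_add_one_iff_ne (end_mem_cycleArc_verts s t)).1 ?_ rfl
  rw [h]
  exact zmodCycle_adj_add_one t

lemma exists_cycleArc_eq {H : (zmodCycle g).Subgraph} (hH : H.Connected) (htop : H ≠ ⊤) :
    ∃ s t, cycleArc s t = H := by
  obtain ⟨s, hs, hadj⟩ := exists_mem_verts_not_sub_one_adj hH.nonempty htop
  obtain ⟨t, ht, ht_min⟩ := Set.exists_min_image {x | ¬H.Adj x (x + 1)} (fun x ↦ (x - s).val)
    (Set.toFinite _) ⟨s - 1, by simpa using hadj⟩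
  have arc_adj (x : ZMod g) (hx : (x - s).val < (t - s).val) : H.Adj x (x + 1) := by
    by_contra h
    exact hx.not_ge (ht_min x h)
  have arc_le : cycleArc s t ≤ H := by
    refine subgraph_zmodCycle_le_of_adj_add_one (fun x hx ↦ ?_)
      fun x hx ↦ arc_adj x (cycleArc_adj_add_one.1 hx)
    obtain rfl | hxs := eq_or_ne x s
    · exact hs
    · have := arc_adj (x - 1) (cycleArc_sub_one_adj.1 ((cycleArc_sub_one_adj_iff_ne hx).2 hxs))
      simpa using this.snd_mem
  have verts_le : H.verts ⊆ (cycleArc s t).verts := by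
    refine (subgraph_connected_iff_forall_closed hs).1 hH _ (start_mem_cycleArc_verts s t) ?_
    intro x y hxy hx
    obtain rfl | rfl := zmodCycle_adj.1 hxy.adj_sub
    · exact ((cycleArc_adj_add_one_iff_ne hx).2 fun h ↦ ht (h ▸ hxy)).snd_mem
    · have hys : y + 1 ≠ s := by
        rintro rfl
        exact hadj (by simpa using hxy.symm)
      simpa using ((cycleArc_sub_one_adj_iff_ne hx).2 hys).fst_mem
  refine ⟨s, t, arc_le.antisymm (subgraph_zmodCycle_le_of_adj_add_one verts_le fun x hx ↦ ?_)⟩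
  exact (cycleArc_adj_add_one_iff_ne (verts_le hx.fst_mem)).2 fun h ↦ ht (h ▸ hx)

lemma coreIndexThrough_zmodCycle (S : Set (ZMod g)) :
    coreIndexThrough (zmodCycle g) S =
      {p : ZMod g × ZMod g | S ⊆ (cycleArc p.1 p.2).verts}.ncard + 1 := by
  have injective : Function.Injective fun p : ZMod g × ZMod g ↦ cycleArc p.1 p.2 :=
    fun p q h ↦ Prod.ext_iff.2 (cycleArc_injective h)
  rw [coreIndexThrough, ← Set.ncard_image_of_injective _ injective,
    ← Set.ncard_insert_of_notMem (a := ⊤) (by simp [cycleArc_ne_top])]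
  congr 1
  ext H
  constructor
  · rintro ⟨hH, hS⟩
    by_cases htop : H = ⊤
    · exact .inl htop
    · obtain ⟨s, t, rfl⟩ := exists_cycleArc_eq hH htop
      exact .inr ⟨(s, t), hS, rfl⟩
  · rintro (rfl | ⟨p, hS, rfl⟩)
    · exact ⟨connected_top_zmodCycle, Set.subset_univ S⟩
    · exact ⟨connected_cycleArc p.1 p.2, hS⟩

lemma coreIndex_zmodCycle : coreIndex (zmodCycle g) = g ^ 2 + 1 := by
  rw [← coreIndexThrough_empty, coreIndexThrough_zmodCycle]
  simp [Set.ncard_univ, sq]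

lemma coreIndexThrough_zmodCycle_singleton (u : ZMod g) :
    coreIndexThrough (zmodCycle g) {u} = (g + 1).choose 2 + 1 := by
  let : LinearOrder (ZMod g) := .lift' ZMod.val (ZMod.val_injective g)
  let e : ZMod g × ZMod g ≃ ZMod g × ZMod g :=
    (Equiv.prodShear (.subLeft u) fun s ↦ .subRight s)
  have card_arcs : Nat.card {p : ZMod g × ZMod g // {u} ⊆ (cycleArc p.1 p.2).verts} =
      Nat.card {p : ZMod g × ZMod g // p.1 ≤ p.2} :=
    Nat.card_congr (e.subtypeEquiv fun p ↦ Set.singleton_subset_iff)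
  have card_pairs : Nat.card {p : ZMod g × ZMod g // p.1 ≤ p.2} = (g + 1).choose 2 := by
    rw [← Nat.card_congr Sym2.sortEquiv, Nat.card_eq_fintype_card, Sym2.card, ZMod.card]
  rw [coreIndexThrough_zmodCycle, ← Nat.card_coe_set_eq, ← card_pairs, ← card_arcs]
  rfl

/-! ### Lollipop graphs minimize the core index -/

variable {V W : Type*} {G : SimpleGraph V} {n : ℕ}

lemma coreIndexThrough_cycleGraph_singleton (x : Fin g) :
    coreIndexThrough (cycleGraph g) {x} = (g + 1).choose 2 + 1 := by
  obtain ⟨e⟩ := exists_iso_zmodCycle_cycleGraph g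
  obtain ⟨y, rfl⟩ := e.surjective x
  rw [← Set.image_singleton, coreIndexThrough_image_of_iso, coreIndexThrough_zmodCycle_singleton]

lemma exists_iso_cycleGraph_apply_eq (x y : Fin g) :
    ∃ e : cycleGraph g ≃g cycleGraph g, e x = y := by
  obtain ⟨e⟩ := exists_iso_zmodCycle_cycleGraph g
  let r := zmodCycleRotation (e.symm y - e.symm x)
  have hr : r (e.symm x) = e.symm y := add_sub_cancel _ _
  exact ⟨(e.symm.trans r).trans e, by simp [hr]⟩

lemma coreIndexThrough_lollipopTip (hgn : g ≤ n) :
    coreIndexThrough (lollipop n g) {lollipopTip n g} = n - g + (g + 1).choose 2 + 1 := by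
  induction n, hgn using Nat.le_induction with
  | base =>
    obtain ⟨e⟩ := exists_iso_cycleGraph_lollipop_self g
    obtain ⟨x, hx⟩ := e.surjective (lollipopTip g g)
    rw [← hx, ← Set.image_singleton, coreIndexThrough_image_of_iso,
      coreIndexThrough_cycleGraph_singleton, Nat.sub_self, zero_add]
  | succ n hgn ih =>
    obtain ⟨e, he⟩ := exists_iso_addLeaf_lollipopTip hgn
    rw [← he, ← Set.image_singleton, coreIndexThrough_image_of_iso, coreIndexThrough_addLeaf_none,
      ih]
    lia

lemma coreIndex_lollipop_succ (hgn : g ≤ n) :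
    coreIndex (lollipop (n + 1) g) = coreIndex (lollipop n g) + (n - g + (g + 1).choose 2 + 2) := by
  obtain ⟨e, -⟩ := exists_iso_addLeaf_lollipopTip hgn
  rw [← coreIndex_eq_of_iso e, coreIndex_addLeaf, coreIndexThrough_lollipopTip hgn]
  rfl

lemma coreIndex_lollipop (hgn : g ≤ n) :
    coreIndex (lollipop n g) = (n - g) * (n + g ^ 2 + 3) / 2 + g ^ 2 + 1 := by
  have two_mul_choose : 2 * (g + 1).choose 2 = (g + 1) * g := by
    rw [Nat.choose_two_right, Nat.add_sub_cancel, Nat.two_mul_div_two_of_even]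
    exact Nat.even_mul_pred_self (g + 1)
  have two_mul_coreIndex (k : ℕ) :
      2 * coreIndex (lollipop (g + k) g) = k * (g + k + g ^ 2 + 3) + 2 * (g ^ 2 + 1) := by
    induction k with
    | zero =>
      obtain ⟨e⟩ := exists_iso_zmodCycle_cycleGraph g
      obtain ⟨e'⟩ := exists_iso_cycleGraph_lollipop_self g
      rw [add_zero, ← coreIndex_eq_of_iso (e.trans e'), coreIndex_zmodCycle, zero_mul, zero_add]
    | succ k ih =>
      have coreIndex_succ := coreIndex_lollipop_succ (g.le_add_right k)
      simp only [Nat.add_sub_cancel_left] at coreIndex_succ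
      rw [← add_assoc, coreIndex_succ]
      linarith
  have := two_mul_coreIndex (n - g)
  rw [Nat.add_sub_cancel' hgn] at this
  lia

lemma not_isAcyclic_of_cycleGraph_isContained (hcycle : cycleGraph g ⊑ G) : ¬G.IsAcyclic := by
  intro h
  obtain ⟨v, p, hp, -⟩ := (cycleGraph_isContained_iff Fact.out).1 hcycle
  exact h p hp

lemma coreIndexThrough_add_two_le_addLeaf_some [Finite V] (hG : G.Connected)
    (hcycle : cycleGraph g ⊑ G) (u x : V) :
    coreIndexThrough G {x} + 2 ≤ coreIndexThrough (addLeaf G u) {some x} := by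
  rw [coreIndexThrough_addLeaf_some]
  exact Nat.add_le_add_left
    (two_le_coreIndexThrough hG (not_isAcyclic_of_cycleGraph_isContained hcycle) _) _

lemma le_coreIndexThrough_singleton [Finite V] (hG : G.Connected) (hcycle : cycleGraph g ⊑ G)
    (x : V) : Nat.card V - g + (g + 1).choose 2 + 1 ≤ coreIndexThrough G {x} := by
  refine induction_on_addLeaf (connected_cycleGraph g) (motive := fun V _ G ↦ ∀ x : V,
    Nat.card V - g + (g + 1).choose 2 + 1 ≤ coreIndexThrough G {x}) ?_ ?_ hG hcycle x
  · intro V _ G f hf x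
    obtain ⟨y, rfl⟩ := hf.surjective x
    have := coreIndexThrough_le_of_copy f {y}
    rw [Set.image_singleton, coreIndexThrough_cycleGraph_singleton] at this
    rwa [← Nat.card_eq_of_bijective f hf, Nat.card_fin, Nat.sub_self, zero_add]
  · intro V V' _ _ G G' u f hf hG' hcycle' ih x
    obtain ⟨p, rfl⟩ := hf.surjective x
    have through_p : Nat.card V' - g + (g + 1).choose 2 + 2 ≤
        coreIndexThrough (addLeaf G' u) {p} := by
      obtain _ | y := p
      · rw [coreIndexThrough_addLeaf_none]
        exact Nat.succ_le_succ (ih u)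
      · have := coreIndexThrough_add_two_le_addLeaf_some hG' hcycle' u y
        have := ih y
        lia
    have through_le := coreIndexThrough_le_of_copy f {p}
    rw [Set.image_singleton] at through_le
    rw [← Nat.card_eq_of_bijective f hf, Finite.card_option]
    lia

lemma exists_iso_apply_eq_lollipopTip (hgn : g ≤ n) {x : Fin g ⊕ Fin (n - g)}
    (hx : coreIndexThrough (lollipop n g) {x} ≤ n - g + (g + 1).choose 2 + 1) :
    ∃ e : lollipop n g ≃g lollipop n g, e x = lollipopTip n g := by
  obtain rfl | ⟨m, rfl, hgm⟩ : n = g ∨ ∃ m, n = m + 1 ∧ g ≤ m := by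
    obtain rfl | hlt := hgn.eq_or_lt
    · exact .inl rfl
    · exact .inr ⟨n - 1, by lia, by lia⟩
  · obtain ⟨e⟩ := exists_iso_cycleGraph_lollipop_self n
    obtain ⟨r, hr⟩ := exists_iso_cycleGraph_apply_eq (e.symm x) (e.symm (lollipopTip n n))
    exact ⟨(e.symm.trans r).trans e, by simp [hr]⟩
  · obtain ⟨e, he⟩ := exists_iso_addLeaf_lollipopTip hgm
    obtain ⟨_ | y, rfl⟩ := e.surjective x
    · exact ⟨.refl, he⟩
    · have hcycle : cycleGraph g ⊑ lollipop m g := ⟨cycleGraphToLollipop m g⟩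
      have hconn := connected_lollipop hgm
      have through_y := le_coreIndexThrough_singleton hconn hcycle y
      have through_some :=
        coreIndexThrough_add_two_le_addLeaf_some hconn hcycle (lollipopTip m g) y
      rw [← Set.image_singleton, coreIndexThrough_image_of_iso] at hx
      rw [Nat.card_sum, Nat.card_fin, Nat.card_fin] at through_y
      lia

lemma nonempty_iso_addLeaf_lollipop_succ [Finite V] (hgn : g ≤ n) (e : G ≃g lollipop n g) {u : V}
    (hu : coreIndexThrough G {u} ≤ n - g + (g + 1).choose 2 + 1) :
    Nonempty (addLeaf G u ≃g lollipop (n + 1) g) := by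
  rw [← coreIndexThrough_image_of_iso e, Set.image_singleton] at hu
  obtain ⟨r, hr⟩ := exists_iso_apply_eq_lollipopTip hgn hu
  obtain ⟨e_succ, -⟩ := exists_iso_addLeaf_lollipopTip hgn
  exact ⟨(addLeafCongr (e.trans r) u).trans (hr.symm ▸ e_succ)⟩

lemma coreIndex_lollipop_le [Finite V] (hG : G.Connected) (hcycle : cycleGraph g ⊑ G) :
    coreIndex (lollipop (Nat.card V) g) ≤ coreIndex G := by
  refine induction_on_addLeaf (connected_cycleGraph g)
    (motive := fun V _ G ↦ coreIndex (lollipop (Nat.card V) g) ≤ coreIndex G) ?_ ?_ hG hcycle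
  · intro V _ G f hf
    obtain ⟨e⟩ := exists_iso_cycleGraph_lollipop_self g
    rw [← Nat.card_eq_of_bijective f hf, Nat.card_fin, ← coreIndex_eq_of_iso e]
    exact coreIndex_le_of_copy f
  · intro V V' _ _ G G' u f hf hG' hcycle' ih
    have card_le := le_card_of_cycleGraph_isContained hcycle'
    have through_u := le_coreIndexThrough_singleton hG' hcycle' u
    calc coreIndex (lollipop (Nat.card V) g)
      _ = coreIndex (lollipop (Nat.card V') g) +
          (Nat.card V' - g + (g + 1).choose 2 + 2) := by
        rw [← Nat.card_eq_of_bijective f hf, Finite.card_option, coreIndex_lollipop_succ card_le]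
      _ ≤ coreIndex G' + coreIndexThrough G' {u} + 1 := by lia
      _ = coreIndex (addLeaf G' u) := coreIndex_addLeaf.symm
      _ ≤ coreIndex G := coreIndex_le_of_copy f

lemma nonempty_iso_lollipop_of_coreIndex_le [Finite V] (hG : G.Connected)
    (hcycle : cycleGraph g ⊑ G) (h : coreIndex G ≤ coreIndex (lollipop (Nat.card V) g)) :
    Nonempty (G ≃g lollipop (Nat.card V) g) := by
  refine induction_on_addLeaf (connected_cycleGraph g) (motive := fun V _ G ↦
    coreIndex G ≤ coreIndex (lollipop (Nat.card V) g) → Nonempty (G ≃g lollipop (Nat.card V) g))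
    ?_ ?_ hG hcycle h
  · intro V _ G f hf h
    obtain ⟨e⟩ := exists_iso_cycleGraph_lollipop_self g
    rw [← Nat.card_eq_of_bijective f hf, Nat.card_fin] at h ⊢
    rw [← coreIndex_eq_of_iso e] at h
    obtain ⟨e'⟩ := nonempty_iso_of_copy_of_coreIndex_le f h
    exact ⟨e'.symm.trans e⟩
  · intro V V' _ _ G G' u f hf hG' hcycle' ih h
    have card_le := le_card_of_cycleGraph_isContained hcycle'
    rw [← Nat.card_eq_of_bijective f hf, Finite.card_option] at h ⊢
    have through_u := le_coreIndexThrough_singleton hG' hcycle' u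
    have addLeaf_le := (coreIndex_le_of_copy f).trans h
    rw [coreIndex_addLeaf, coreIndex_lollipop_succ card_le] at addLeaf_le
    obtain ⟨e⟩ := ih (by lia)
    have minimal := coreIndex_lollipop_le hG' hcycle'
    obtain ⟨e_succ⟩ := nonempty_iso_addLeaf_lollipop_succ card_le e (u := u) (by lia)
    rw [← coreIndex_eq_of_iso e_succ] at h
    obtain ⟨e'⟩ := nonempty_iso_of_copy_of_coreIndex_le f h
    exact ⟨e'.symm.trans e_succ⟩

end CycleAndLollipop

lemma cycleGraph_girth_isContained {V : Type*} {G : SimpleGraph V} (hG : G.girth ≠ 0) :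
    cycleGraph G.girth ⊑ G := by
  have not_acyclic : ¬G.IsAcyclic := fun h ↦ hG h.girth_eq_zero
  obtain ⟨v, p, hp, hlength⟩ := exists_girth_eq_length.2 not_acyclic
  exact (cycleGraph_isContained_iff (three_le_girth not_acyclic)).2 ⟨v, p, hp, hlength.symm⟩

theorem lollipop_minimizes_coreIndex_general {n g : ℕ} (hg : 3 ≤ g) (hgn : g ≤ n) :
    (∀ {V : Type*} [Finite V] (G : SimpleGraph V), Nat.card V = n → G.Connected →
      cycleGraph g ⊑ G →
      (coreIndex (lollipop n g) ≤ coreIndex G ∧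
        (coreIndex G = coreIndex (lollipop n g) ↔ Nonempty (G ≃g lollipop n g)))) ∧
    coreIndex (lollipop n g) = (n - g) * (n + g ^ 2 + 3) / 2 + g ^ 2 + 1 := by
  have : Fact (2 < g) := ⟨hg⟩
  refine ⟨?_, coreIndex_lollipop hgn⟩
  rintro V _ G rfl hG hcycle
  exact ⟨coreIndex_lollipop_le hG hcycle,
    fun h ↦ nonempty_iso_lollipop_of_coreIndex_le hG hcycle h.le,
    fun ⟨e⟩ ↦ coreIndex_eq_of_iso e⟩

/-- For `3 ≤ g < n`, among all unicyclic graphs on `n` vertices with girth `g`, the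
lollipop graph `U^l_{n,g}` uniquely minimizes the core index, and
`F(U^l_{n,g}) = ((n-g)/2)(n + g² + 3) + g² + 1`. -/
theorem lollipop_minimizes_coreIndex (n g : ℕ) (hg : 3 ≤ g) (hgn : g < n) :
    (∀ {V : Type} [Fintype V] (G : SimpleGraph V), Fintype.card V = n →
      G.Connected → Nat.card G.edgeSet = n → G.girth = g →
      (coreIndex (lollipop n g) ≤ coreIndex G ∧
        (coreIndex G = coreIndex (lollipop n g) ↔ Nonempty (G ≃g lollipop n g)))) ∧
    coreIndex (lollipop n g) = (n - g) * (n + g ^ 2 + 3) / 2 + g ^ 2 + 1 := by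
  obtain ⟨minimal, formula⟩ := lollipop_minimizes_coreIndex_general hg hgn.le
  refine ⟨fun G hcard hG _ hgirth ↦ minimal G (Nat.card_eq_fintype_card.trans hcard) hG ?_, formula⟩
  exact hgirth ▸ cycleGraph_girth_isContained (by lia)
end
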